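/- arXiv:1704.02921 — 5 statements merged into one kernel-verified Lean document; each statement's English description precedes it below -/
import Mathlib

section
/- Let P be a path on n vertices whose vertex set is partitioned into m subsets V_1,...,V_m. Then there exist two disjoint independent sets S_1 and S_2 of P such that |S_1| + |S_2| = n - m, the sizes |S_1| and |S_2| differ by at most one, |S_1 ∩ V_j| + |S_2 ∩ V_j| = |V_j| - 1 for every j ∈ [m], and |S_i ∩ V_j| ≥ |V_j|/2 - 1 for every i ∈ {1,2} and j ∈ [m]. -/
/-!
Color the path by its classes and read the colors as a word `w`. A *marking* of `w` deletes some
letters and sends the others to `S₁` and `S₂`; if the kept letters alternate between the two sets,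
both sets are independent and their sizes differ by at most one. So we look for an alternating
marking that deletes exactly one letter of each color and splits every color evenly.

For units `t j` indexed by the colors, give the kept letters `c` alternately the weights `t c` and
`(t c)⁻¹`, and sum the products over all ways to delete one letter of each color. In characteristic
two this sum `F w t` does not change when a square `a a` is cancelled, and transposing adjacent
letters `a`, `b` changes it by `(t a * (t b)⁻¹ + t b * (t a)⁻¹) * F w' t`, where `w'` lacks the two
letters. Both rules are symmetric under `t ↦ t⁻¹` and reduce every word to one without repetitions,
where `F` does not depend on `t`, so `F w t⁻¹ = F w t`. Hence, over `𝔽₂` and with independent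
variables `t j`, the coefficients of opposite monomials cancel in pairs, and the constant
coefficient is the sum of all coefficients, `F w 1 = ∏ j, w.count j`. If all counts are odd it is
nonzero, and the marking exists.

In general, append one extra letter for each color of even count and discard these letters
afterwards. A color then has either exactly one deletion and an imbalance of at most one, or no
deletion and no imbalance; in the latter case drop one more vertex from either side, choosing the
sides so as to keep the totals balanced.
-/

section Words

variable {ι : Type*}

theorem word_induction {motive : List ι → Prop}
    (nodup : ∀ w : List ι, w.Nodup → motive w)
    (cancel : ∀ a w, motive w → motive (a :: a :: w))
    (swap : ∀ u a b x, motive (u ++ x) → motive (u ++ a :: b :: x) → motive (u ++ b :: a :: x))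
    (w : List ι) : motive w := by
  -- A repeated letter can be transposed next to its twin and then cancelled.
  induction hn : w.length using Nat.strong_induction_on generalizing w with
  | _ n ih =>
    have of_perm {v v' : List ι} (hp : v.Perm v') :
        ∀ u, (u ++ v).length = n → motive (u ++ v) → motive (u ++ v') := by
      induction hp with
      | nil => exact fun _ _ h => h
      | cons a _ ihp =>
        intro u hu h
        rw [List.append_cons] at hu h ⊢
        exact ihp _ hu h
      | swap a b x => exact fun u hu h => swap u b a x (ih _ (by grind) _ rfl) h
      | trans hp _ ih₁ ih₂ =>
        exact fun u hu h => ih₂ u (by simpa [hp.length_eq] using hu) (ih₁ u hu h)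
    by_cases hw : w.Nodup
    · exact nodup w hw
    obtain ⟨a, ha⟩ : ∃ a, [a, a].Sublist w := by simpa [List.nodup_iff_sublist] using hw
    obtain ⟨x, hx⟩ := ha.exists_perm_append
    have hlen : x.length + 2 = n := by rw [← hn, hx.length_eq]; rfl
    exact of_perm hx.symm [] (by simpa using hlen) (cancel a x (ih _ (by omega) x rfl))

lemma count_map_fst_eq [DecidableEq ι] (p : List (ι × Option Bool)) (j : ι) :
    (p.map Prod.fst).count j =
      p.count (j, none) + p.count (j, some true) + p.count (j, some false) := by
  induction p with
  | nil => rfl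
  | cons a p ih =>
    obtain ⟨i, y⟩ := a
    simp only [List.map_cons, List.count_cons, ih]
    by_cases hij : i = j <;> rcases y with _ | _ | _ <;> simp [hij] <;> omega

lemma exists_eq_map_prodMk {α β : Type*} [Nonempty β] {l : List α} (hl : l.Nodup) (c : α → ι)
    {p : List (ι × β)} (hp : p.map Prod.fst = l.map c) :
    ∃ x : α → β, p = l.map fun i => (c i, x i) := by
  classical
  induction l generalizing p with
  | nil => exact ⟨fun _ => Classical.arbitrary β, by simpa using hp⟩
  | cons a l ih =>
    obtain ⟨ha, hl⟩ := List.nodup_cons.1 hl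
    obtain ⟨⟨_, y⟩, p, rfl, rfl, hp'⟩ := List.map_eq_cons_iff.1 hp
    obtain ⟨x, rfl⟩ := ih hl hp'
    refine ⟨Function.update x a y, ?_⟩
    rw [List.map_cons, Function.update_self]
    refine congrArg _ (List.map_congr_left fun i hi => ?_)
    rw [Function.update_of_ne (ne_of_mem_of_not_mem hi ha)]

end Words

section DeletionSum

variable {ι R : Type*} [DecidableEq ι]

/-- The sum over all ways to delete from the word exactly one letter `j` for each `j ∈ J` (and no
other letters) of the product of the weights of the remaining letters, where these are weighted
alternately by `t` and by `t⁻¹`. -/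
def deletionSum [CommSemiring R] : List ι → Finset ι → (ι → Rˣ) → R
  | [], J, _ => if J = ∅ then 1 else 0
  | c :: w, J, t => t c * deletionSum w J t⁻¹ + if c ∈ J then deletionSum w (J.erase c) t else 0

section CommSemiring

variable [CommSemiring R]

lemma map_deletionSum {S : Type*} [CommSemiring S] (f : R →+* S) (w : List ι) (J : Finset ι)
    (t : ι → Rˣ) :
    f (deletionSum w J t) = deletionSum w J fun j => Units.map (f : R →* S) (t j) := by
  induction w generalizing J t with
  | nil => simp only [deletionSum, apply_ite f, map_one, map_zero]
  | cons c w ih =>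
    have h_inv : (fun j => Units.map (f : R →* S) (t⁻¹ j)) = (fun j => Units.map f (t j))⁻¹ := by
      ext; simp
    simp only [deletionSum, map_add, map_mul, apply_ite f, map_zero, ih, h_inv]
    rfl

lemma deletionSum_one (w : List ι) (J : Finset ι) :
    deletionSum w J (1 : ι → Rˣ) = ∏ j ∈ J, (w.count j : R) := by
  induction w generalizing J with
  | nil =>
    rcases J.eq_empty_or_nonempty with rfl | ⟨j, hj⟩
    · simp [deletionSum]
    · simp [deletionSum, Finset.ne_empty_of_mem hj, Finset.prod_eq_zero hj]
  | cons c w ih =>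
    have h_ne : ∀ j ∈ J.erase c, ((c :: w).count j : R) = w.count j := fun j hj => by
      rw [List.count_cons_of_ne (Finset.ne_of_mem_erase hj).symm]
    simp only [deletionSum, Pi.one_apply, Units.val_one, one_mul, inv_one, ih]
    split_ifs with hc
    · rw [← Finset.mul_prod_erase J _ hc, ← Finset.mul_prod_erase J _ hc,
        Finset.prod_congr rfl h_ne, List.count_cons_self]
      push_cast
      ring
    · rw [add_zero, ← Finset.prod_congr rfl (Finset.erase_eq_of_notMem hc ▸ h_ne)]

lemma deletionSum_eq_zero {w : List ι} {J : Finset ι} (h : w.length < J.card) (t : ι → Rˣ) :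
    deletionSum w J t = 0 := by
  induction w generalizing J t with
  | nil => exact if_neg (Finset.card_pos.1 h).ne_empty
  | cons c w ih =>
    rw [List.length_cons] at h
    have h_erase := Finset.pred_card_le_card_erase (s := J) (a := c)
    rw [deletionSum, ih (by omega), ih (by omega), mul_zero, ite_self, add_zero]

lemma deletionSum_eq_of_length_le {w : List ι} {J : Finset ι} (h : w.length ≤ J.card)
    (t t' : ι → Rˣ) : deletionSum w J t = deletionSum w J t' := by
  induction w generalizing J t t' with
  | nil => rfl
  | cons c w ih =>
    rw [List.length_cons] at h
    have h_erase := Finset.pred_card_le_card_erase (s := J) (a := c)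
    simp only [deletionSum, deletionSum_eq_zero (Nat.lt_of_succ_le h), mul_zero]
    rw [ih (by omega) t t']

end CommSemiring

section CharTwo

variable [CommRing R] [CharP R 2]

lemma deletionSum_cons_cons_self (a : ι) (w : List ι) (J : Finset ι) (t : ι → Rˣ) :
    deletionSum (a :: a :: w) J t = deletionSum w J t := by
  simp only [deletionSum, inv_inv, Pi.inv_apply, Finset.notMem_erase, if_false, add_zero, mul_add,
    Units.mul_inv_cancel_left]
  split_ifs
  · rw [add_assoc, CharTwo.add_self_eq_zero, add_zero]
  · simp

lemma deletionSum_swap (u : List ι) (a b : ι) (x : List ι) (J : Finset ι) (t : ι → Rˣ) :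
    deletionSum (u ++ b :: a :: x) J t = deletionSum (u ++ a :: b :: x) J t +
      (t a * ↑(t b)⁻¹ + t b * ↑(t a)⁻¹) * deletionSum (u ++ x) J t := by
  have h2 : (2 : R) = 0 := CharTwo.two_eq_zero
  induction u generalizing J t with
  | nil =>
    rcases eq_or_ne a b with rfl | hab
    · rw [CharTwo.add_self_eq_zero, zero_mul, add_zero]
    simp only [List.nil_append, deletionSum, inv_inv, Pi.inv_apply, Finset.mem_erase, ne_eq, hab,
      hab.symm, not_false_eq_true, true_and, Finset.erase_right_comm (a := b) (b := a)]
    split_ifs <;> linear_combination (-(t a * ↑(t b)⁻¹ * deletionSum x J t)) * h2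
  | cons c u ih =>
    simp only [List.cons_append, deletionSum, ih, Pi.inv_apply, inv_inv]
    split_ifs <;> ring

theorem deletionSum_univ_inv [Fintype ι] (w : List ι) (t : ι → Rˣ) :
    deletionSum w Finset.univ t⁻¹ = deletionSum w Finset.univ t := by
  induction w using word_induction generalizing t with
  | nodup w hw => exact deletionSum_eq_of_length_le hw.length_le_card _ _
  | cancel a w ih => simp only [deletionSum_cons_cons_self, ih]
  | swap u a b x ih₁ ih₂ =>
    simp only [deletionSum_swap u a b, ih₁, ih₂, Pi.inv_apply, inv_inv]
    ring

end CharTwo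

end DeletionSum

section Laurent

open AddMonoidAlgebra

lemma coeff_zero_eq_sum_coeff {R G : Type*} [CommRing R] [CharP R 2] [AddCommGroup G]
    [IsAddTorsionFree G] {f : AddMonoidAlgebra R G} (hf : ∀ v, f.coeff (-v) = f.coeff v) :
    f.coeff 0 = f.coeff.sum fun _ r => r := by
  classical
  rw [← Finsupp.add_sum_erase' f.coeff 0 _ fun _ => rfl, left_eq_add]
  refine Finset.sum_involution (fun v _ => -v) (fun v hv => ?_) (fun v hv _ => ?_) (fun v hv => ?_)
    fun v _ => neg_neg v <;>
  rw [Finsupp.support_erase, Finset.mem_erase] at hv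
  · simp [Finsupp.erase_ne, hv.1, hf, CharTwo.add_self_eq_zero]
  · exact mt neg_eq_self.1 hv.1
  · simpa [hf] using hv

variable {ι : Type*} [DecidableEq ι]

/-- The monomial of exponent `±1` in the variable `j`, as a unit of the ring of Laurent polynomials
in variables indexed by `ι` (the group algebra of `ι → ℤ`). The exponent is `1` for `b = true`, so
that the exponents in `deletionSum w J (signedUnit R b)` are, for the alternating markings with
first mark `b`, the differences between the numbers of `true` and `false` marks. -/
noncomputable def signedUnit (R : Type*) [CommSemiring R] (b : Bool) (j : ι) :
    (AddMonoidAlgebra R (ι → ℤ))ˣ :=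
  Units.map (AddMonoidAlgebra.of R (ι → ℤ))
    (toUnits (Multiplicative.ofAdd (Pi.single j (cond b 1 (-1)))))

lemma coe_signedUnit (R : Type*) [CommSemiring R] (b : Bool) (j : ι) :
    (signedUnit R b j : AddMonoidAlgebra R (ι → ℤ)) = single (Pi.single j (cond b 1 (-1))) 1 := rfl

lemma signedUnit_inv (R : Type*) [CommSemiring R] (b : Bool) :
    (signedUnit R b : ι → _)⁻¹ = signedUnit R (!b) := by
  funext j
  simp only [Pi.inv_apply, signedUnit, ← map_inv, ← ofAdd_neg, ← Pi.single_neg]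
  cases b <;> simp

-- In a marking, `none` stands for a deleted letter and `some b` for a letter kept on side `b`.
lemma exists_marking_of_coeff_deletionSum_ne_zero {R : Type*} [CommSemiring R] {w : List ι}
    {J : Finset ι} {b : Bool} {v : ι → ℤ} (h : (deletionSum w J (signedUnit R b)).coeff v ≠ 0) :
    ∃ p : List (ι × Option Bool), p.map Prod.fst = w ∧
      ((!b) :: p.filterMap Prod.snd).IsChain (· ≠ ·) ∧
      (∀ j, p.count (j, none) = if j ∈ J then 1 else 0) ∧
      ∀ j, (p.count (j, some true) : ℤ) - p.count (j, some false) = v j := by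
  induction w generalizing J b v with
  | nil =>
    obtain rfl : J = ∅ := by_contra fun hJ => h (by simp [deletionSum, hJ])
    obtain rfl : v = 0 := by_contra fun hv => h (by simp [deletionSum, one_def, hv])
    exact ⟨[], by simp⟩
  | cons c w ih =>
    rw [deletionSum, signedUnit_inv, coe_signedUnit, coeff_add, Finsupp.add_apply,
      coeff_single_mul_apply, one_mul] at h
    rcases ne_or_eq ((deletionSum w J (signedUnit R (!b))).coeff
      (-Pi.single c (cond b 1 (-1)) + v)) 0 with h_keep | h_keep
    · obtain ⟨p, rfl, h_chain, h_none, h_some⟩ := ih h_keep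
      refine ⟨(c, some b) :: p, rfl, ?_, fun j => ?_, fun j => ?_⟩
      · simpa using h_chain
      · simp [h_none]
      · have h_old := h_some j
        simp only [List.count_cons, Pi.add_apply, Pi.neg_apply, Pi.single_apply] at h_old ⊢
        cases b <;> grind
    · rw [h_keep, zero_add] at h
      split_ifs at h with hc
      · obtain ⟨p, rfl, h_chain, h_none, h_some⟩ := ih h
        refine ⟨(c, none) :: p, rfl, h_chain, fun j => ?_, fun j => ?_⟩
        · by_cases hj : c = j
          · subst hj
            simp [h_none, hc]
          · simp [h_none, hj, Ne.symm hj]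
        · simpa using h_some j
      · simp at h

lemma sum_coeff_deletionSum {R : Type*} [CommSemiring R] (w : List ι) (J : Finset ι) (b : Bool) :
    (deletionSum w J (signedUnit R b)).coeff.sum (fun _ r => r) = ∏ j ∈ J, (w.count j : R) := by
  have h := map_deletionSum (lift R R (ι → ℤ) 1 : _ →+* R) w J (signedUnit R b)
  rw [← deletionSum_one]
  convert h using 2
  · simp [lift_apply]
  · ext
    simp [coe_signedUnit]

lemma coeff_neg_deletionSum {R : Type*} [CommSemiring R] (w : List ι) (J : Finset ι)
    (b : Bool) (v : ι → ℤ) :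
    (deletionSum w J (signedUnit R b)⁻¹).coeff (-v) =
      (deletionSum w J (signedUnit R b)).coeff v := by
  have h_inv : (fun j => Units.map (mapDomainRingHom R (negAddMonoidHom : (ι → ℤ) →+ ι → ℤ) :
      AddMonoidAlgebra R (ι → ℤ) →* _) (signedUnit R b j)) = (signedUnit R b)⁻¹ := by
    rw [signedUnit_inv]
    ext j : 2
    cases b <;> simp [coe_signedUnit, ← Pi.single_neg]
  rw [← h_inv, ← map_deletionSum]
  exact Finsupp.mapDomain_apply neg_injective _ _

theorem exists_balanced_marking [Finite ι] {w : List ι} (hw : ∀ j, Odd (w.count j)) :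
    ∃ p : List (ι × Option Bool), p.map Prod.fst = w ∧
      (p.filterMap Prod.snd).IsChain (· ≠ ·) ∧
      ∀ j, p.count (j, none) = 1 ∧ p.count (j, some true) = p.count (j, some false) := by
  cases nonempty_fintype ι
  have : CharP (AddMonoidAlgebra (ZMod 2) (ι → ℤ)) 2 :=
    charP_of_injective_algebraMap (FaithfulSMul.algebraMap_injective (ZMod 2) _) 2
  have h_coeff : (deletionSum w Finset.univ (signedUnit (ZMod 2) true)).coeff 0 = 1 := by
    rw [coeff_zero_eq_sum_coeff, sum_coeff_deletionSum]
    · exact Finset.prod_eq_one fun j _ => ZMod.natCast_eq_one_iff_odd.2 (hw j)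
    · intro v
      rw [← coeff_neg_deletionSum, deletionSum_univ_inv, neg_neg]
  obtain ⟨p, hp, h_chain, h_none, h_some⟩ :=
    exists_marking_of_coeff_deletionSum_ne_zero (h_coeff.trans_ne one_ne_zero)
  exact ⟨p, hp, h_chain.tail, fun j =>
    ⟨by simpa using h_none j, by simpa [sub_eq_zero] using h_some j⟩⟩

theorem exists_almost_balanced_marking [Finite ι] (w : List ι) :
    ∃ p : List (ι × Option Bool), p.map Prod.fst = w ∧
      (p.filterMap Prod.snd).IsChain (· ≠ ·) ∧
      ∀ j, p.count (j, none) ≤ 1 ∧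
        ∀ b, p.count (j, some b) ≤ p.count (j, some !b) + p.count (j, none) := by
  cases nonempty_fintype ι
  set E : Finset ι := {j | Even (w.count j)}
  have h_count (j : ι) : E.toList.count j = if Even (w.count j) then 1 else 0 := by
    rw [List.Nodup.count E.nodup_toList]
    simp [E]
  obtain ⟨p, hp, h_chain, h_bal⟩ := exists_balanced_marking (w := w ++ E.toList) fun j => by
    rw [List.count_append, h_count]
    split_ifs with hj
    · exact hj.add_one
    · simpa using hj
  obtain ⟨p, q, rfl, hp, hq⟩ := List.map_eq_append_iff.1 hp
  rw [List.filterMap_append] at h_chain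
  refine ⟨p, hp, h_chain.left_of_append, fun j => ?_⟩
  have h_q : q.count (j, none) + q.count (j, some true) + q.count (j, some false) ≤ 1 := by
    rw [← count_map_fst_eq, hq, h_count]
    split_ifs <;> omega
  simp only [List.count_append] at h_bal
  have h_bal_j := h_bal j
  simp only [Bool.forall_bool, Bool.not_false, Bool.not_true]
  omega

end Laurent

open Finset

lemma card_filter_Icc_one (n : ℕ) (P : ℕ → Prop) [DecidablePred P] :
    #{i ∈ Icc 1 n | P i} = (List.range' 1 n).countP P := by
  rw [List.countP_eq_length_filter]
  rfl

lemma apply_succ_ne_of_isChain_filterMap {α : Type*} {n : ℕ} {x : ℕ → Option α}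
    (h : ((List.range' 1 n).filterMap x).IsChain (· ≠ ·)) {i : ℕ} (hi : i ∈ Icc 1 n)
    (hi' : i + 1 ∈ Icc 1 n) {a : α} (ha : x i = some a) : x (i + 1) ≠ some a := by
  intro ha'
  rw [mem_Icc] at hi hi'
  have h_infix : [i, i + 1] <:+: List.range' 1 n :=
    List.infix_iff_getElem?.2 ⟨i - 1, by grind, by grind⟩
  simpa [ha, ha'] using h.infix (h_infix.filterMap x)

theorem exists_almost_fair_pair {ι : Type*} [Finite ι] [DecidableEq ι] (n : ℕ) (c : ℕ → ι) :
    ∃ T : Bool → Finset ℕ, (∀ b, T b ⊆ Icc 1 n) ∧ Disjoint (T true) (T false) ∧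
      (∀ b, ∀ i ∈ T b, i + 1 ∉ T b) ∧ (∀ b, #(T b) ≤ #(T !b) + 1) ∧
      ∀ j, ∃ d ≤ 1, d + #{i ∈ T true | c i = j} + #{i ∈ T false | c i = j} =
        #{i ∈ Icc 1 n | c i = j} ∧
          ∀ b, #{i ∈ T b | c i = j} ≤ #{i ∈ T !b | c i = j} + d := by
  obtain ⟨p, hp, h_chain, h_bal⟩ := exists_almost_balanced_marking ((List.range' 1 n).map c)
  obtain ⟨x, rfl⟩ := exists_eq_map_prodMk List.nodup_range' c hp
  rw [List.filterMap_map] at h_chain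
  have h_card (b : Bool) :
      #{i ∈ Icc 1 n | x i = some b} = ((List.range' 1 n).filterMap x).count b := by
    rw [card_filter_Icc_one, List.count_filterMap]
    simp only [beq_eq_decide]
  have h_class (j : ι) (b : Bool) : #{i ∈ {i ∈ Icc 1 n | x i = some b} | c i = j} =
      ((List.range' 1 n).map fun i => (c i, x i)).count (j, some b) := by
    rw [filter_filter, card_filter_Icc_one, List.count, List.countP_map]
    refine List.countP_congr fun i _ => by simp [and_comm]
  refine ⟨fun b => {i ∈ Icc 1 n | x i = some b}, fun b => filter_subset _ _, ?_, ?_, ?_, ?_⟩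
  · exact disjoint_filter.2 fun i _ h => by simp [h]
  · intro b i hi hi'
    rw [mem_filter] at hi hi'
    exact apply_succ_ne_of_isChain_filterMap h_chain hi.1 hi'.1 hi.2 hi'.2
  · intro b
    simpa [h_card] using h_chain.count_not_le_count_add_one (!b)
  · intro j
    obtain ⟨h_le, h_diff⟩ := h_bal j
    refine ⟨_, h_le, ?_, ?_⟩
    · rw [h_class, h_class, ← count_map_fst_eq, hp, card_filter_Icc_one, List.count,
        List.countP_map]
      rfl
    · simpa only [h_class] using h_diff

section Trim

variable {ι α : Type*} [DecidableEq ι]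

lemma exists_subset_remove_one {c : α → ι} {T : Finset α} {Z : Finset ι}
    (hZ : ∀ j ∈ Z, ∃ i ∈ T, c i = j) :
    ∃ S ⊆ T, #S + #Z = #T ∧
      ∀ j, #{i ∈ S | c i = j} + (if j ∈ Z then 1 else 0) = #{i ∈ T | c i = j} := by
  classical
  obtain ⟨R, hRT, h_inj, rfl⟩ := exists_subset_injOn_image_eq_of_surjOn (T : Set α) Z hZ
  rw [coe_subset] at hRT
  have h_fiber (j : ι) : #{i ∈ R | c i = j} = if j ∈ R.image c then 1 else 0 := by
    rw [← card_image_of_injOn (h_inj.mono (filter_subset _ _)),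
      ← filter_image (p := fun k => k = j), filter_eq', apply_ite card, card_singleton, card_empty]
  refine ⟨T \ R, sdiff_subset, ?_, fun j => ?_⟩
  · rw [card_image_of_injOn h_inj, card_sdiff_add_card_eq_card hRT]
  · have h_sdiff : {i ∈ T \ R | c i = j} = {i ∈ T | c i = j} \ {i ∈ R | c i = j} := by grind
    rw [← h_fiber, h_sdiff, card_sdiff_add_card_eq_card (filter_subset_filter _ hRT)]

lemma card_add_card_add_card_eq [Fintype ι] {c : α → ι} {A B U : Finset α}
    (h : ∀ j, #{i ∈ A | c i = j} + #{i ∈ B | c i = j} + 1 = #{i ∈ U | c i = j}) :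
    #A + #B + Fintype.card ι = #U := by
  have h_fiber (T : Finset α) : #T = ∑ j, #{i ∈ T | c i = j} :=
    card_eq_sum_card_fiberwise fun i _ => mem_univ (c i)
  simp only [h_fiber A, h_fiber B, h_fiber U, ← h, sum_add_distrib, sum_const, smul_eq_mul, mul_one,
    card_univ]

theorem exists_balanced_removal {c : α → ι} {T : Bool → Finset α} (hT : ∀ b, #(T b) ≤ #(T !b) + 1)
    {Z : Finset ι} (hZ : ∀ j ∈ Z, ∀ b, ∃ i ∈ T b, c i = j) :
    ∃ S : Bool → Finset α, (∀ b, S b ⊆ T b) ∧ (∀ b, #(S b) ≤ #(S !b) + 1) ∧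
      ∀ j, ∃ e : Bool → ℕ, e true + e false = (if j ∈ Z then 1 else 0) ∧
        ∀ b, #{i ∈ S b | c i = j} + e b = #{i ∈ T b | c i = j} := by
  simp only [Bool.forall_bool, Bool.not_false, Bool.not_true] at hT
  -- `T true` loses the classes in `Y` and `T false` the others; `#Y` solves
  -- `#(T true) - #Y = #(T false) - (#Z - #Y)` up to rounding.
  obtain ⟨Y, hYZ, hY⟩ := exists_subset_card_eq (s := Z) (n := (#(T true) + #Z - #(T false)) / 2)
    (by omega)
  have h_card := card_sdiff_add_card_eq_card hYZ
  have h_sub (b : Bool) : cond b Y (Z \ Y) ⊆ Z := by cases b <;> simp [hYZ]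
  choose S hST hS h_class using fun b =>
    exists_subset_remove_one fun j (hj : j ∈ cond b Y (Z \ Y)) => hZ j (h_sub b hj) b
  have h_sum := And.intro (hS true) (hS false)
  simp only [cond_true, cond_false] at h_sum
  refine ⟨S, hST, Bool.forall_bool.2 ?_, fun j => ⟨_, ?_, (h_class · j)⟩⟩
  · simp only [Bool.not_false, Bool.not_true]
    omega
  · by_cases hj : j ∈ Y
    · simp [hj, hYZ hj]
    · simp [hj]

theorem exists_fair_pair [Finite ι] {n : ℕ} {c : ℕ → ι} (hc : ∀ j, ∃ i ∈ Icc 1 n, c i = j) :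
    ∃ S : Bool → Finset ℕ, (∀ b, S b ⊆ Icc 1 n) ∧ Disjoint (S true) (S false) ∧
      (∀ b, ∀ i ∈ S b, i + 1 ∉ S b) ∧ (∀ b, #(S b) ≤ #(S !b) + 1) ∧
      ∀ j, #{i ∈ S true | c i = j} + #{i ∈ S false | c i = j} + 1 = #{i ∈ Icc 1 n | c i = j} ∧
        ∀ b, #{i ∈ S b | c i = j} ≤ #{i ∈ S !b | c i = j} + 1 := by
  cases nonempty_fintype ι
  obtain ⟨T, hT, h_disj, h_indep, h_card, h_class⟩ := exists_almost_fair_pair n c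
  choose d hd h_sum h_diff using h_class
  obtain ⟨S, hST, hS, h_rem⟩ := exists_balanced_removal (c := c) (Z := {j | d j = 0}) h_card <| by
    intro j hj b
    rw [mem_filter_univ] at hj
    have h_pos := card_pos.2 (filter_nonempty_iff.2 (hc j))
    have h_sum_j := h_sum j
    have h_diff_j := h_diff j
    rw [← filter_nonempty_iff, ← card_pos]
    simp only [Bool.forall_bool, Bool.not_false, Bool.not_true] at h_diff_j
    cases b <;> omega
  refine ⟨S, fun b => (hST b).trans (hT b), h_disj.mono (hST _) (hST _),
    fun b i hi hi' => h_indep b i (hST b hi) (hST b hi'), hS, fun j => ?_⟩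
  obtain ⟨e, he, h_rem⟩ := h_rem j
  have h_sum_j := h_sum j
  have h_diff_j := h_diff j
  have hd_j := hd j
  simp only [mem_filter_univ] at he
  simp only [Bool.forall_bool, Bool.not_false, Bool.not_true] at h_rem h_diff_j ⊢
  split_ifs at he <;> omega

lemma exists_coloring_of_partition [DecidableEq α] [Nonempty ι] [Fintype ι] {V : ι → Finset α}
    {U : Finset α} (hU : univ.biUnion V = U) (hV : ∀ j k, j ≠ k → Disjoint (V j) (V k)) :
    ∃ c : α → ι, ∀ j, V j = {i ∈ U | c i = j} := by
  have h_mem : ∀ i ∈ U, ∃ j, i ∈ V j := by simp [← hU]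
  choose! c hc using h_mem
  refine ⟨c, fun j => ext fun i => ?_⟩
  rw [mem_filter]
  refine ⟨fun hi => ?_, fun ⟨hi, hij⟩ => hij ▸ hc i hi⟩
  have hiU : i ∈ U := hU ▸ mem_biUnion.2 ⟨j, mem_univ j, hi⟩
  exact ⟨hiU, by_contra fun hij => disjoint_left.1 (hV _ _ hij) (hc i hiU) hi⟩

end Trim

lemma half_sub_one_le {a b v : ℕ} (h : a + b + 1 = v) (hba : b ≤ a + 1) : (v : ℚ) / 2 - 1 ≤ a := by
  have hv : (v : ℚ) ≤ 2 * a + 2 := by exact_mod_cast (show v ≤ 2 * a + 2 by omega)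
  linarith

/-- Theorem 1 (main): fair splitting of a path into two independent sets after
removing one vertex per class. Vertices of the path are `1,...,n`. -/
theorem fair_path_split (n m : ℕ) (V : Fin m → Finset ℕ)
    (hcover : Finset.univ.biUnion V = Finset.Icc 1 n)
    (hdisj : ∀ j k : Fin m, j ≠ k → Disjoint (V j) (V k))
    (hne : ∀ j, (V j).Nonempty) :
    ∃ S₁ S₂ : Finset ℕ,
      S₁ ⊆ Finset.Icc 1 n ∧ S₂ ⊆ Finset.Icc 1 n ∧
      Disjoint S₁ S₂ ∧
      (∀ i ∈ S₁, i + 1 ∉ S₁) ∧ (∀ i ∈ S₂, i + 1 ∉ S₂) ∧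
      S₁.card + S₂.card = n - m ∧
      S₁.card ≤ S₂.card + 1 ∧ S₂.card ≤ S₁.card + 1 ∧
      (∀ j, (S₁ ∩ V j).card + (S₂ ∩ V j).card = (V j).card - 1) ∧
      (∀ j, ((V j).card : ℚ) / 2 - 1 ≤ ((S₁ ∩ V j).card : ℚ) ∧
            ((V j).card : ℚ) / 2 - 1 ≤ ((S₂ ∩ V j).card : ℚ)) := by
  obtain hm | hm := isEmpty_or_nonempty (Fin m)
  · have hn : n = 0 := by simpa [eq_comm (a := ∅)] using hcover
    exact ⟨∅, ∅, by simp [hn]⟩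
  obtain ⟨c, hc⟩ := exists_coloring_of_partition hcover hdisj
  obtain ⟨S, hS, h_disj, h_indep, h_bal, h_class⟩ := exists_fair_pair (n := n) (c := c) fun j => by
    simpa [filter_nonempty_iff, hc] using hne j
  have h_inter (b : Bool) (j : Fin m) : S b ∩ V j = {i ∈ S b | c i = j} := by
    rw [hc, inter_filter, inter_eq_left.2 (hS b)]
  have h_total : #(S true) + #(S false) + m = n := by
    simpa using card_add_card_add_card_eq fun j => (h_class j).1
  simp only [← h_inter, ← hc] at h_class
  refine ⟨S true, S false, hS _, hS _, h_disj, h_indep _, h_indep _, by omega, h_bal true,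
    h_bal false, fun j => by have := (h_class j).1; omega, fun j => ?_⟩
  obtain ⟨h_sum, h_diff⟩ := h_class j
  exact ⟨half_sub_one_le h_sum (h_diff false),
    half_sub_one_le (by rw [← h_sum, add_comm #(S false ∩ V j)]) (h_diff true)⟩
end

section
/- Let P be a path whose vertex set is partitioned into m subsets V_1,...,V_m. Then there exists an independent set S of P such that |S ∩ V_j| ≥ |V_j|/2 - 1 for all j ∈ [m], and the inequality |S ∩ V_j| > |V_j|/2 - 1 holds for at least m/2 indices j. -/
/-!
Cut the path at one vertex of each class and let a sign alternate along the path, except that it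
is reversed at every cut. The vertices of sign `1`, and those of sign `-1`, form independent sets,
so it suffices to choose the cuts such that both signs occur equally often in each class. Classes
of even size first receive an additional vertex.

The number of such choices is odd for every set `K` of classes of odd size, by induction on `K`.
To add a class `k`, cut at one vertex of each class in `K` and at one gap between two vertices, and
ask that `K` is balanced and `k` has positive sum. Moving the gap from one end of the path to the
other reverses all signs, so the number of times this condition changes has the parity of the
number of choices for `K`. A change happens when the gap crosses a vertex `b`; grouping the
changes by the cut set with `b` included, those with `b` in a class of `K` come in pairs, and those
with `b` in the class `k` correspond to the choices for `insert k K`.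
-/

open Finset Function

/-- The sequence `a` with the terms at `W` deleted (set to `0`) and all signs reversed at each
element of `W`. -/
def cutAt (W : Finset ℕ) (a : ℕ → ℤˣ) (i : ℕ) : ℤ :=
  if i ∈ W then 0 else (-1) ^ #{w ∈ W | w < i} * a i

/-- The sequence `x` with all signs reversed at the gap between `g - 1` and `g`. -/
def flipFrom (g : ℕ) (x : ℕ → ℤ) (i : ℕ) : ℤ :=
  if i < g then x i else -x i

section Sequences

variable {W s : Finset ℕ} {a : ℕ → ℤˣ} {x : ℕ → ℤ} {b i N : ℕ}

lemma cutAt_of_mem (hi : i ∈ W) : cutAt W a i = 0 := if_pos hi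

lemma exists_cutAt_eq_unit (a : ℕ → ℤˣ) (hi : i ∉ W) : ∃ u : ℤˣ, cutAt W a i = u :=
  ⟨(-1) ^ #{w ∈ W | w < i} * a i, by simp [cutAt, hi]⟩

lemma cutAt_erase_of_lt (hib : i < b) : cutAt (W.erase b) a i = cutAt W a i := by
  have hfilter : ({w ∈ W.erase b | w < i} : Finset ℕ) = {w ∈ W | w < i} := by
    rw [filter_erase, erase_eq_of_notMem (by simp [hib.le])]
  simp [cutAt, hfilter, hib.ne]

lemma cutAt_erase_of_gt (hb : b ∈ W) (hbi : b < i) :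
    cutAt (W.erase b) a i = -cutAt W a i := by
  have hcard : #{w ∈ W | w < i} = #{w ∈ W.erase b | w < i} + 1 := by
    rw [filter_erase, card_erase_add_one (by simp [hb, hbi])]
  simp [cutAt, hcard, hbi.ne', pow_succ, apply_ite Neg.neg]

lemma cutAt_succ (hi : i ∉ W) (hi' : i + 1 ∉ W) (ha : a (i + 1) = -a i) :
    cutAt W a (i + 1) = -cutAt W a i := by
  have hfilter : ({w ∈ W | w < i + 1} : Finset ℕ) = {w ∈ W | w < i} := by
    refine filter_congr fun w hw => ?_
    have : w ≠ i := ne_of_mem_of_not_mem hw hi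
    omega
  rw [cutAt, cutAt, if_neg hi, if_neg hi', hfilter, ha, Units.val_neg, mul_neg]

lemma cutAt_succ_ne_of_eq_unit {ε : ℤˣ} (ha : a (i + 1) = -a i) (hi : cutAt W a i = ε) :
    cutAt W a (i + 1) ≠ ε := by
  intro hi'
  have hiW : i ∉ W := fun h => ε.ne_zero (hi.symm.trans (cutAt_of_mem h))
  have hiW' : i + 1 ∉ W := fun h => ε.ne_zero (hi'.symm.trans (cutAt_of_mem h))
  have hneg := cutAt_succ hiW hiW' ha
  rw [hi, hi'] at hneg
  exact ε.ne_zero (self_eq_neg.1 hneg)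

lemma sum_flipFrom_zero (x : ℕ → ℤ) (s : Finset ℕ) :
    ∑ i ∈ s, flipFrom 0 x i = -∑ i ∈ s, x i := by
  simp [flipFrom]

lemma sum_flipFrom_of_subset_range (x : ℕ → ℤ) (hs : s ⊆ range N) :
    ∑ i ∈ s, flipFrom N x i = ∑ i ∈ s, x i :=
  sum_congr rfl fun _ hi => if_pos (mem_range.1 (hs hi))

lemma sum_flipFrom_succ (hb : b ∈ s → x b = 0) :
    ∑ i ∈ s, flipFrom (b + 1) x i = ∑ i ∈ s, flipFrom b x i := by
  refine sum_congr rfl fun i hi => ?_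
  rcases eq_or_ne i b with rfl | hib
  · simp [flipFrom, hb hi]
  · simp only [flipFrom, show i < b + 1 ↔ i < b by omega]

lemma flipFrom_cutAt_erase (a : ℕ → ℤˣ) (hb : b ∈ W) :
    flipFrom b (cutAt (W.erase b) a) = cutAt W a + Pi.single b (-cutAt (W.erase b) a b) := by
  ext i
  rcases lt_trichotomy i b with hib | rfl | hib
  · simp [flipFrom, hib, hib.ne, cutAt_erase_of_lt]
  · simp [flipFrom, cutAt_of_mem hb]
  · simp [flipFrom, hib.not_gt, hib.ne', cutAt_erase_of_gt hb hib]

lemma flipFrom_succ_cutAt_erase (a : ℕ → ℤˣ) (hb : b ∈ W) :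
    flipFrom (b + 1) (cutAt (W.erase b) a) =
      cutAt W a + Pi.single b (cutAt (W.erase b) a b) := by
  ext i
  rcases lt_trichotomy i b with hib | rfl | hib
  · simp [flipFrom, hib.trans b.lt_succ_self, hib.ne, cutAt_erase_of_lt hib]
  · simp [flipFrom, cutAt_of_mem hb]
  · simp [flipFrom, show ¬i < b + 1 by omega, hib.ne', cutAt_erase_of_gt hb hib]

lemma sum_add_single (x : ℕ → ℤ) (s : Finset ℕ) (b : ℕ) (u : ℤ) :
    ∑ i ∈ s, (x + Pi.single b u : ℕ → ℤ) i = ∑ i ∈ s, x i + if b ∈ s then u else 0 := by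
  simp [sum_add_distrib, sum_pi_single']

lemma two_mul_card_filter_cutAt_add_card_inter (W s : Finset ℕ) (a : ℕ → ℤˣ) (ε : ℤˣ) :
    (2 * #{i ∈ s | cutAt W a i = ε} + #(s ∩ W) : ℤ) = #s + ε * ∑ i ∈ s, cutAt W a i := by
  have hterm (i : ℕ) : (2 * (if cutAt W a i = ε then 1 else 0) + (if i ∈ W then 1 else 0) : ℤ) =
      1 + ε * cutAt W a i := by
    by_cases hi : i ∈ W
    · simp [cutAt_of_mem hi, hi, ε.ne_zero.symm]
    · obtain ⟨u, hu⟩ := exists_cutAt_eq_unit a hi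
      rcases Int.units_eq_one_or u with rfl | rfl <;>
        rcases Int.units_eq_one_or ε with rfl | rfl <;> simp [hu, hi]
  have htotal := sum_congr (rfl : s = s) fun i _ => hterm i
  simpa only [sum_add_distrib, ← mul_sum, sum_boole, sum_const, nsmul_one, filter_mem_eq_inter]
    using htotal

lemma even_sum_cutAt_iff : Even (∑ i ∈ s, cutAt W a i) ↔ (Even #s ↔ Even #(s ∩ W)) := by
  have hcount := two_mul_card_filter_cutAt_add_card_inter W s a 1
  rw [Units.val_one, one_mul] at hcount
  grind

end Sequences

section PowersetSums

lemma sum_powerset_sum_erase {α M : Type*} [DecidableEq α] [AddCommMonoid M] (B : Finset α)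
    (f : Finset α → α → M) :
    ∑ W ∈ B.powerset, ∑ b ∈ W, f (W.erase b) b = ∑ Q ∈ B.powerset, ∑ b ∈ B \ Q, f Q b := by
  rw [sum_sigma', sum_sigma']
  refine sum_bij' (fun p _ => ⟨p.1.erase p.2, p.2⟩) (fun p _ => ⟨insert p.2 p.1, p.2⟩)
    ?_ ?_ ?_ ?_ fun _ _ => rfl
  all_goals
    rintro ⟨W, b⟩ h
    simp only [mem_sigma, mem_powerset, mem_sdiff] at h ⊢
  · exact ⟨(erase_subset _ _).trans h.1, h.1 h.2, notMem_erase _ _⟩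
  · exact ⟨insert_subset h.2.1 h.1, mem_insert_self _ _⟩
  · simp [insert_erase h.2]
  · simp [erase_insert h.2.2]

lemma sum_add_succ_eq_of_charTwo {R : Type*} [Ring R] [CharP R 2] {f : ℕ → R} {s : Finset ℕ}
    {N : ℕ} (hs : s ⊆ range N) (hf : ∀ b ∉ s, f (b + 1) = f b) :
    ∑ b ∈ s, (f b + f (b + 1)) = f 0 + f N := by
  calc
    _ = ∑ b ∈ range N, (f b + f (b + 1)) :=
      sum_subset hs fun b _ hb => by rw [hf b hb, CharTwo.add_self_eq_zero]
    _ = ∑ b ∈ range N, (f (b + 1) - f b) := by simp only [CharTwo.sub_eq_add, add_comm]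
    _ = f 0 + f N := by rw [sum_range_sub, CharTwo.sub_eq_add, add_comm]

end PowersetSums

section Splitting

variable {ι : Type*} [DecidableEq ι]

/-- `W` meets the classes `V j` with `j ∈ K` in exactly one element and is disjoint from the other
classes. Elements of `W` outside of all classes are not excluded. -/
def IsTransversal (V : ι → Finset ℕ) (K : Finset ι) (W : Finset ℕ) : Prop :=
  ∀ j, #(W ∩ V j) = if j ∈ K then 1 else 0

/-- The sequence `x` has sum `0` over each of the classes `V j` with `j ∈ K`. -/
def IsBalanced (V : ι → Finset ℕ) (K : Finset ι) (x : ℕ → ℤ) : Prop :=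
  ∀ j ∈ K, ∑ i ∈ V j, x i = 0

/-- `W` is a transversal of the classes in `K` such that cutting at `W` balances them. -/
def IsSplitting (V : ι → Finset ℕ) (a : ℕ → ℤˣ) (K : Finset ι) (W : Finset ℕ) : Prop :=
  IsTransversal V K W ∧ IsBalanced V K (cutAt W a)

/-- `Q` is a transversal of the classes in `K` such that cutting at `Q` and at the gap before `g`
balances them and gives the class `k` a positive sum. -/
def IsGapSplitting (V : ι → Finset ℕ) (a : ℕ → ℤˣ) (K : Finset ι) (k : ι) (Q : Finset ℕ)
    (g : ℕ) : Prop :=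
  IsTransversal V K Q ∧ IsBalanced V K (flipFrom g (cutAt Q a)) ∧
    0 < ∑ i ∈ V k, flipFrom g (cutAt Q a) i

open Classical in
/-- This is `1` if moving the gap from before to after `b` changes whether it forms a gap
splitting with `Q`, and `0` otherwise. -/
noncomputable def crossing (V : ι → Finset ℕ) (a : ℕ → ℤˣ) (K : Finset ι) (k : ι) (Q : Finset ℕ)
    (b : ℕ) : ZMod 2 :=
  (if IsGapSplitting V a K k Q b then 1 else 0) +
    if IsGapSplitting V a K k Q (b + 1) then 1 else 0

variable {V : ι → Finset ℕ} {a : ℕ → ℤˣ} {K : Finset ι} {W Q : Finset ℕ} {b : ℕ} {j k : ι}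

omit [DecidableEq ι] in
lemma mem_iff_eq_of_pairwise_disjoint (hV : Pairwise (Disjoint on V)) (hbj : b ∈ V j) {i : ι} :
    b ∈ V i ↔ i = j :=
  ⟨fun hbi => hV.eq (not_disjoint_iff.2 ⟨b, hbi, hbj⟩), fun h => h ▸ hbj⟩

lemma isTransversal_erase_iff (hV : Pairwise (Disjoint on V)) (hb : b ∈ W) (hbj : b ∈ V j) :
    IsTransversal V K (W.erase b) ↔
      ∀ i, #(W ∩ V i) = (if i ∈ K then 1 else 0) + if i = j then 1 else 0 := by
  refine forall_congr' fun i => ?_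
  rw [erase_inter]
  by_cases hij : i = j
  · subst hij
    rw [← card_erase_add_one (mem_inter.2 ⟨hb, hbj⟩)]
    simp
  · rw [erase_eq_of_notMem (by simp [mem_iff_eq_of_pairwise_disjoint hV hbj, hij])]
    simp [hij]

lemma isTransversal_erase_iff_insert (hV : Pairwise (Disjoint on V)) (hk : k ∉ K) (hb : b ∈ W)
    (hbk : b ∈ V k) : IsTransversal V K (W.erase b) ↔ IsTransversal V (insert k K) W := by
  rw [isTransversal_erase_iff hV hb hbk]
  refine forall_congr' fun i => ?_
  by_cases hik : i = k
  · simp [hik, hk]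
  · simp [hik]

lemma IsTransversal.even_sum_cutAt_iff (hW : IsTransversal V K W) (hodd : Odd #(V k)) :
    Even (∑ i ∈ V k, cutAt W a i) ↔ k ∈ K := by
  rw [_root_.even_sum_cutAt_iff, iff_false_left (Nat.not_even_iff_odd.2 hodd), inter_comm, hW k]
  split_ifs with hk <;> simp [hk]

lemma isGapSplitting_succ_iff (hb : ∀ i ∈ insert k K, b ∈ V i → b ∈ Q) :
    IsGapSplitting V a K k Q (b + 1) ↔ IsGapSplitting V a K k Q b := by
  have hsum (i : ι) (hi : i ∈ insert k K) :
      ∑ l ∈ V i, flipFrom (b + 1) (cutAt Q a) l = ∑ l ∈ V i, flipFrom b (cutAt Q a) l :=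
    sum_flipFrom_succ fun hbi => cutAt_of_mem (hb i hi hbi)
  have hbal : IsBalanced V K (flipFrom (b + 1) (cutAt Q a)) ↔
      IsBalanced V K (flipFrom b (cutAt Q a)) :=
    forall₂_congr fun i hi => by rw [hsum i (mem_insert_of_mem hi)]
  rw [IsGapSplitting, IsGapSplitting, hbal, hsum k (mem_insert_self k K)]

open Classical in
lemma crossing_eq_zero (hb : ∀ i ∈ insert k K, b ∉ V i) : crossing V a K k Q b = 0 := by
  have hiff : IsGapSplitting V a K k Q (b + 1) ↔ IsGapSplitting V a K k Q b :=
    isGapSplitting_succ_iff fun i hi hbi => absurd hbi (hb i hi)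
  simp only [crossing, hiff, CharTwo.add_self_eq_zero]

omit [DecidableEq ι] in
lemma isBalanced_add_single_iff_of_notMem (hb : ∀ i ∈ K, b ∉ V i) (x : ℕ → ℤ) (u : ℤ) :
    IsBalanced V K (x + Pi.single b u) ↔ IsBalanced V K x :=
  forall₂_congr fun i hi => by rw [sum_add_single, if_neg (hb i hi), add_zero]

lemma isBalanced_insert_iff {x : ℕ → ℤ} :
    IsBalanced V (insert j K) x ↔ ∑ i ∈ V j, x i = 0 ∧ IsBalanced V K x :=
  forall_mem_insert ..

lemma isBalanced_add_single_iff_of_mem (hV : Pairwise (Disjoint on V)) (hj : j ∈ K)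
    (hbj : b ∈ V j) (x : ℕ → ℤ) (u : ℤ) :
    IsBalanced V K (x + Pi.single b u) ↔
      ∑ i ∈ V j, x i = -u ∧ IsBalanced V (K.erase j) x := by
  have hb : ∀ i ∈ K.erase j, b ∉ V i := fun i hi hbi =>
    ne_of_mem_erase hi ((mem_iff_eq_of_pairwise_disjoint hV hbj).1 hbi)
  rw [← insert_erase hj, isBalanced_insert_iff, insert_erase hj,
    isBalanced_add_single_iff_of_notMem hb, sum_add_single, if_pos hbj, add_eq_zero_iff_eq_neg]

open Classical in
lemma crossing_erase_of_mem (hV : Pairwise (Disjoint on V)) (hk : k ∉ K) (hj : j ∈ K)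
    (hb : b ∈ W) (hbj : b ∈ V j) :
    crossing V a K k (W.erase b) b =
      if (∀ i, #(W ∩ V i) = (if i ∈ K then 1 else 0) + if i = j then 1 else 0) ∧
        |∑ i ∈ V j, cutAt W a i| = 1 ∧ IsBalanced V (K.erase j) (cutAt W a) ∧
          0 < ∑ i ∈ V k, cutAt W a i then 1 else 0 := by
  obtain ⟨u, hu⟩ := exists_cutAt_eq_unit a (notMem_erase b W)
  have hbk : b ∉ V k := fun hbk => hk ((mem_iff_eq_of_pairwise_disjoint hV hbj).1 hbk ▸ hj)
  simp only [crossing, IsGapSplitting, isTransversal_erase_iff hV hb hbj,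
    flipFrom_cutAt_erase a hb, flipFrom_succ_cutAt_erase a hb, hu,
    isBalanced_add_single_iff_of_mem hV hj hbj, sum_add_single, if_neg hbk, add_zero]
  rcases Int.units_eq_one_or u with rfl | rfl <;>
    simp only [Units.val_one, Units.val_neg] <;> grind

open Classical in
lemma crossing_erase_self (hV : Pairwise (Disjoint on V)) (hk : k ∉ K) (hodd : Odd #(V k))
    (hb : b ∈ W) (hbk : b ∈ V k) :
    crossing V a K k (W.erase b) b = if IsSplitting V a (insert k K) W then 1 else 0 := by
  obtain ⟨u, hu⟩ := exists_cutAt_eq_unit a (notMem_erase b W)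
  have hbK : ∀ i ∈ K, b ∉ V i := fun i hi hbi =>
    hk ((mem_iff_eq_of_pairwise_disjoint hV hbk).1 hbi ▸ hi)
  have heven (hW : IsTransversal V (insert k K) W) : Even (∑ i ∈ V k, cutAt W a i) :=
    (hW.even_sum_cutAt_iff hodd).2 (mem_insert_self k K)
  simp only [crossing, IsGapSplitting, IsSplitting, isTransversal_erase_iff_insert hV hk hb hbk,
    flipFrom_cutAt_erase a hb, flipFrom_succ_cutAt_erase a hb, hu, isBalanced_insert_iff,
    isBalanced_add_single_iff_of_notMem hbK, sum_add_single, if_pos hbk]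
  -- For even `t`, exactly one of `t + 1` and `t - 1` is positive if and only if `t = 0`.
  rcases Int.units_eq_one_or u with rfl | rfl <;>
    simp only [Units.val_one, Units.val_neg] <;> grind

open Classical in
lemma sum_inter_crossing_erase (hV : Pairwise (Disjoint on V)) (hk : k ∉ K) (hodd : Odd #(V k))
    (W : Finset ℕ) (j : ι) :
    ∑ b ∈ W ∩ V j, crossing V a K k (W.erase b) b =
      if j = k then if IsSplitting V a (insert k K) W then 1 else 0 else 0 := by
  by_cases hjk : j = k
  · subst hjk
    rw [if_pos rfl, sum_congr rfl fun b hb =>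
      crossing_erase_self hV hk hodd (mem_inter.1 hb).1 (mem_inter.1 hb).2, sum_const]
    split_ifs with hW
    · have hcard : #(W ∩ V j) = 1 := by simpa using hW.1 j
      rw [hcard, one_nsmul]
    · rw [nsmul_zero]
  rw [if_neg hjk]
  by_cases hj : j ∈ K
  · rw [sum_congr rfl fun b hb =>
      crossing_erase_of_mem hV hk hj (mem_inter.1 hb).1 (mem_inter.1 hb).2, sum_const]
    split_ifs with hW
    · have hcard : #(W ∩ V j) = 2 := by simpa [hj] using hW.1 j
      rw [hcard, two_nsmul, CharTwo.add_self_eq_zero]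
    · rw [nsmul_zero]
  · refine sum_eq_zero fun b hb => crossing_eq_zero fun i hi hbi => ?_
    have hij : i = j := (mem_iff_eq_of_pairwise_disjoint hV (mem_inter.1 hb).2).1 hbi
    simp [hij, hjk, hj] at hi

variable [Fintype ι]

open Classical in
lemma sum_crossing_erase (hV : Pairwise (Disjoint on V)) (hk : k ∉ K) (hodd : Odd #(V k))
    (hW : W ⊆ univ.biUnion V) :
    ∑ b ∈ W, crossing V a K k (W.erase b) b =
      if IsSplitting V a (insert k K) W then 1 else 0 := by
  calc
    _ = ∑ j, ∑ b ∈ W ∩ V j, crossing V a K k (W.erase b) b := by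
      rw [← sum_biUnion fun i _ j _ hij => (hV hij).mono inter_subset_right inter_subset_right,
        ← inter_biUnion, inter_eq_left.2 hW]
    _ = _ := by simp only [sum_inter_crossing_erase hV hk hodd, sum_ite_eq', mem_univ, if_true]

open Classical in
lemma sum_crossing_sdiff (hk : k ∉ K) (hodd : Odd #(V k)) (Q : Finset ℕ) :
    ∑ b ∈ univ.biUnion V \ Q, crossing V a K k Q b = if IsSplitting V a K Q then 1 else 0 := by
  obtain ⟨N, hN⟩ := exists_nat_subset_range (univ.biUnion V)
  have hVN (i : ι) : V i ⊆ range N := (subset_biUnion_of_mem V (mem_univ i)).trans hN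
  have hsucc (b : ℕ) (hb : b ∉ univ.biUnion V \ Q) :
      IsGapSplitting V a K k Q (b + 1) ↔ IsGapSplitting V a K k Q b :=
    isGapSplitting_succ_iff fun i _ hbi => by
      by_contra hbQ
      exact hb (mem_sdiff.2 ⟨mem_biUnion.2 ⟨i, mem_univ i, hbi⟩, hbQ⟩)
  have hzero : IsGapSplitting V a K k Q 0 ↔
      IsSplitting V a K Q ∧ ∑ i ∈ V k, cutAt Q a i < 0 := by
    simp only [IsGapSplitting, IsSplitting, IsBalanced, sum_flipFrom_zero, neg_eq_zero, neg_pos,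
      and_assoc]
  have hlast : IsGapSplitting V a K k Q N ↔
      IsSplitting V a K Q ∧ 0 < ∑ i ∈ V k, cutAt Q a i := by
    simp only [IsGapSplitting, IsSplitting, IsBalanced, sum_flipFrom_of_subset_range _ (hVN _),
      and_assoc]
  have hne (hQ : IsSplitting V a K Q) : ∑ i ∈ V k, cutAt Q a i ≠ 0 := by
    intro h
    exact hk ((hQ.1.even_sum_cutAt_iff hodd).1 (h ▸ Even.zero))
  simp only [crossing]
  rw [sum_add_succ_eq_of_charTwo (f := fun g => if IsGapSplitting V a K k Q g then 1 else 0)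
    (sdiff_subset.trans hN) fun b hb => by simp only [hsucc b hb]]
  simp only [hzero, hlast]
  grind

open Classical in
lemma sum_isSplitting_insert (a : ℕ → ℤˣ) (hV : Pairwise (Disjoint on V)) (hk : k ∉ K)
    (hodd : Odd #(V k)) :
    (∑ W ∈ (univ.biUnion V).powerset, if IsSplitting V a (insert k K) W then 1 else 0 : ZMod 2) =
      ∑ W ∈ (univ.biUnion V).powerset, if IsSplitting V a K W then 1 else 0 := by
  calc
    _ = ∑ W ∈ (univ.biUnion V).powerset, ∑ b ∈ W, crossing V a K k (W.erase b) b :=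
      sum_congr rfl fun W hW => (sum_crossing_erase hV hk hodd (mem_powerset.1 hW)).symm
    _ = ∑ Q ∈ (univ.biUnion V).powerset, ∑ b ∈ univ.biUnion V \ Q, crossing V a K k Q b :=
      sum_powerset_sum_erase ..
    _ = _ := sum_congr rfl fun Q _ => sum_crossing_sdiff hk hodd Q

lemma isSplitting_empty_iff (hW : W ⊆ univ.biUnion V) : IsSplitting V a ∅ W ↔ W = ∅ := by
  refine ⟨fun h => ?_, by rintro rfl; simp [IsSplitting, IsTransversal, IsBalanced]⟩
  have hdisj : ∀ j ∈ univ, Disjoint W (V j) := fun j _ => by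
    simpa [disjoint_iff_inter_eq_empty] using h.1 j
  exact disjoint_self.1 (((disjoint_biUnion_right W univ V).2 hdisj).mono_right hW)

omit [Fintype ι] in
theorem exists_isSplitting [Finite ι] (hV : Pairwise (Disjoint on V)) (a : ℕ → ℤˣ)
    (K : Finset ι) (hodd : ∀ j ∈ K, Odd #(V j)) : ∃ W, IsSplitting V a K W := by
  classical
  cases nonempty_fintype ι
  have hcount : (∑ W ∈ (univ.biUnion V).powerset,
      if IsSplitting V a K W then 1 else 0 : ZMod 2) = 1 := by
    induction K using Finset.induction_on with
    | empty =>
      rw [sum_congr rfl fun W hW => if_congr (isSplitting_empty_iff (mem_powerset.1 hW)) rfl rfl]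
      simp
    | insert k K hk ih =>
      rw [sum_isSplitting_insert a hV hk (hodd k (mem_insert_self k K)),
        ih fun j hj => hodd j (mem_insert_of_mem hj)]
  by_contra! h
  simp [h] at hcount

end Splitting

section IndependentSets

variable {ι : Type*} {V : ι → Finset ℕ}

lemma exists_odd_card_superset [Finite ι] (hV : Pairwise (Disjoint on V)) :
    ∃ V' : ι → Finset ℕ, Pairwise (Disjoint on V') ∧
      ∀ j, V j ⊆ V' j ∧ Odd #(V' j) ∧ #(V' j) ≤ #(V j) + 1 := by
  cases nonempty_fintype ι
  obtain ⟨N, hN⟩ := exists_nat_subset_range (univ.biUnion V)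
  have hlt {j : ι} {i : ℕ} (hi : i ∈ V j) : i < N :=
    mem_range.1 (hN (mem_biUnion.2 ⟨j, mem_univ j, hi⟩))
  let extra (j : ι) : ℕ := N + Fintype.equivFin ι j
  have hextra (i j : ι) : extra i ∉ V j := fun h =>
    (hlt h).not_ge (Nat.le_add_right N _)
  have hinj : Injective extra := fun i j hij =>
    (Fintype.equivFin ι).injective (Fin.ext (Nat.add_left_cancel hij))
  refine ⟨fun j => if Even #(V j) then insert (extra j) (V j) else V j, fun i j hij => ?_,
    fun j => ?_⟩
  · have hd : Disjoint (V i) (V j) := hV hij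
    have hne := hinj.ne hij.symm
    dsimp only [onFun]
    split_ifs <;> simp [hd, hextra, hne]
  · dsimp only
    split_ifs with heven
    · rw [card_insert_of_notMem (hextra j j)]
      exact ⟨subset_insert _ _, heven.add_one, le_rfl⟩
    · exact ⟨Subset.rfl, Nat.not_even_iff_odd.1 heven, Nat.le_succ _⟩

theorem exists_independent_pair [Fintype ι] (hV : Pairwise (Disjoint on V)) :
    ∃ S : ℤˣ → Finset ℕ, (∀ ε, S ε ⊆ univ.biUnion V) ∧ (∀ ε, ∀ i ∈ S ε, i + 1 ∉ S ε) ∧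
      (∀ ε j, 2 * #(S ε ∩ V j) ≤ #(V j)) ∧
        ∀ j, #(V j) ≤ #(S 1 ∩ V j) + #(S (-1) ∩ V j) + 1 := by
  classical
  obtain ⟨V', hV', hsup⟩ := exists_odd_card_superset hV
  choose hsub hodd hle using hsup
  let a (i : ℕ) : ℤˣ := (-1) ^ i
  obtain ⟨W, hWtr, hWbal⟩ := exists_isSplitting hV' a univ fun j _ => hodd j
  have hW (j : ι) : #(V' j ∩ W) = 1 := by simpa [inter_comm] using hWtr j
  have hinter (ε : ℤˣ) (j : ι) : {i ∈ univ.biUnion V | cutAt W a i = ε} ∩ V j =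
      {i ∈ V j | cutAt W a i = ε} := by
    rw [filter_inter, inter_eq_right.2 (subset_biUnion_of_mem V (mem_univ j))]
  refine ⟨fun ε => {i ∈ univ.biUnion V | cutAt W a i = ε}, fun ε => filter_subset _ _,
    fun ε i hi hi' => ?_, fun ε j => ?_, fun j => ?_⟩
  · exact cutAt_succ_ne_of_eq_unit (show a (i + 1) = -a i by simp [a, pow_succ])
      (mem_filter.1 hi).2 (mem_filter.1 hi').2
  · have hcount := two_mul_card_filter_cutAt_add_card_inter W (V' j) a ε
    rw [hWbal j (mem_univ j), hW j] at hcount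
    have hmono : #{i ∈ V j | cutAt W a i = ε} ≤ #{i ∈ V' j | cutAt W a i = ε} :=
      card_le_card (filter_subset_filter _ (hsub j))
    have := hle j
    rw [hinter]
    lia
  · rw [hinter, hinter]
    have hcover : V j ⊆ {i ∈ V j | cutAt W a i = (1 : ℤˣ)} ∪
        {i ∈ V j | cutAt W a i = (-1 : ℤˣ)} ∪ (V' j ∩ W) := by
      intro i hi
      by_cases hiW : i ∈ W
      · simp [hiW, hsub j hi]
      · obtain ⟨u, hu⟩ := exists_cutAt_eq_unit a hiW
        rcases Int.units_eq_one_or u with rfl | rfl <;> simp [hi, hu]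
    calc
      #(V j) ≤ _ := card_le_card hcover
      _ ≤ _ := (card_union_le _ _).trans (add_le_add (card_union_le _ _) (hW j).le)

theorem aharoni_conjecture_general {ι : Type*} [Fintype ι] (V : ι → Finset ℕ)
    (hdisj : ∀ j k : ι, j ≠ k → Disjoint (V j) (V k)) :
    ∃ S : Finset ℕ, S ⊆ univ.biUnion V ∧
      (∀ i ∈ S, i + 1 ∉ S) ∧
      (∀ j, (#(V j) : ℚ) / 2 - 1 ≤ #(S ∩ V j)) ∧
      (Fintype.card ι : ℚ) / 2 ≤ #{j | (#(V j) : ℚ) / 2 - 1 < #(S ∩ V j)} := by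
  classical
  obtain ⟨S, hS, hindep, hhalf, hcover⟩ := exists_independent_pair (V := V) fun j k => hdisj j k
  have hhalfQ (ε : ℤˣ) (j : ι) : 2 * (#(S ε ∩ V j) : ℚ) ≤ #(V j) := mod_cast hhalf ε j
  have hcoverQ (j : ι) : (#(V j) : ℚ) ≤ #(S 1 ∩ V j) + #(S (-1) ∩ V j) + 1 := mod_cast hcover j
  have hweak (ε : ℤˣ) (j : ι) : (#(V j) : ℚ) / 2 - 1 ≤ #(S ε ∩ V j) := by
    rcases Int.units_eq_one_or ε with rfl | rfl
    · linarith [hhalfQ (-1) j, hcoverQ j]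
    · linarith [hhalfQ 1 j, hcoverQ j]
  let strict (ε : ℤˣ) : Finset ι := {j | (#(V j) : ℚ) / 2 - 1 < #(S ε ∩ V j)}
  have hunion : strict 1 ∪ strict (-1) = univ := by
    ext j
    simp only [strict, mem_union, mem_filter, mem_univ, true_and, iff_true]
    by_contra! h
    linarith [hcoverQ j]
  have hcard : (Fintype.card ι : ℚ) ≤ #(strict 1) + #(strict (-1)) := by
    rw [← card_univ, ← hunion]
    exact mod_cast card_union_le _ _
  obtain ⟨ε, hε⟩ : ∃ ε, (Fintype.card ι : ℚ) / 2 ≤ #(strict ε) := by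
    by_contra! h
    linarith [h 1, h (-1)]
  exact ⟨S ε, hS ε, hindep ε, hweak ε, hε⟩

end IndependentSets

/-- Conjecture of Aharoni et al.: an independent set of the path on `1,...,n`
meeting each class `V j` in at least `|V j|/2 - 1` vertices, with strict
inequality for at least `m/2` classes. -/
theorem aharoni_conjecture (n m : ℕ) (V : Fin m → Finset ℕ)
    (hcover : Finset.univ.biUnion V = Finset.Icc 1 n)
    (hdisj : ∀ j k : Fin m, j ≠ k → Disjoint (V j) (V k))
    (hne : ∀ j, (V j).Nonempty) :
    ∃ S : Finset ℕ, S ⊆ Finset.Icc 1 n ∧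
      (∀ i ∈ S, i + 1 ∉ S) ∧
      (∀ j, ((V j).card : ℚ) / 2 - 1 ≤ ((S ∩ V j).card : ℚ)) ∧
      (m : ℚ) / 2 ≤
        ((Finset.univ.filter
          (fun j : Fin m => ((V j).card : ℚ) / 2 - 1 < ((S ∩ V j).card : ℚ))).card : ℚ) := by
  simpa only [hcover, Fintype.card_fin] using aharoni_conjecture_general V hdisj
end

section
/- Let C be a cycle on n vertices whose vertex set is partitioned into m subsets V_1,...,V_m. Then there exist two disjoint sets S_1 and S_2 covering all vertices but exactly one in each V_j, with |S_1| and |S_2| differing by at most one, satisfying |S_i ∩ V_j| ≥ |V_j|/2 - 1 for all i ∈ {1,2} and j ∈ [m], where one of the S_i is an independent set of C of size ⌊(n-m)/2⌋ and the other set induces at most ⌈(n-m)/2⌉ - ⌊(n-m)/2⌋ edges of C. -/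
/-!
Sign the vertices by disjoint sets `P` and `N`. Call such a signing overloaded on `V j` if `P` or
`N` takes more than half of `V j`, a tie being broken by a chosen `r j ∈ V j`. A signing that is
nowhere overloaded misses a vertex of every `V j`. Away from overloaded signings, the length of a
longest alternating sequence starting in `P` changes under the antipode `(P, N) ↦ (N, P)`. If it
stayed below `n - m`, then the lengths and one further label for each `V j` would label the signings
with fewer than `n` labels, in violation of Tucker's lemma for the octahedral sphere, which is
proved by counting flags of signings modulo 2. So some nowhere overloaded signing has an alternating
sequence of `n - m` vertices; it misses exactly one vertex of every `V j` and alternates along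
`0, …, n - 1`. Hence `N` is independent even around the cycle, and the only edge that `P` may induce
is the one closing it.
-/

/-- The number of maximal flags of nonempty subsets of `T`, each flag being weighted by the product
of the values of `p` at its members: in characteristic two, the parity of the number of flags in a
family of sets with indicator function `p`. -/
def flagCount {α R : Type*} [DecidableEq α] [CommSemiring R] (p : Finset α → R)
    (T : Finset α) : R :=
  if T = ∅ then 1 else p T * ∑ v ∈ T.attach, flagCount p (T.erase v.1)
termination_by T.card
decreasing_by exact Finset.card_erase_lt_of_mem v.2

section FlagCount

variable {α R : Type*} [DecidableEq α]

section CommSemiring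

variable [CommSemiring R]

lemma flagCount_empty (p : Finset α → R) : flagCount p ∅ = 1 := by
  rw [flagCount, if_pos rfl]

lemma flagCount_of_nonempty (p : Finset α → R) {T : Finset α} (hT : T.Nonempty) :
    flagCount p T = p T * ∑ v ∈ T, flagCount p (T.erase v) := by
  rw [flagCount, if_neg hT.ne_empty, Finset.sum_attach T (fun v => flagCount p (T.erase v))]

lemma flagCount_congr {p q : Finset α → R} {T : Finset α}
    (h : ∀ t ⊆ T, t.Nonempty → p t = q t) : flagCount p T = flagCount q T := by
  induction T using Finset.strongInduction with
  | H T ih =>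
    rcases T.eq_empty_or_nonempty with rfl | hT
    · rw [flagCount_empty, flagCount_empty]
    · rw [flagCount_of_nonempty p hT, flagCount_of_nonempty q hT, h T subset_rfl hT]
      congr 1
      exact Finset.sum_congr rfl fun v hv => ih _ (Finset.erase_ssubset hv) fun t ht =>
        h t (ht.trans (Finset.erase_subset v T))

/-- A flag with nonzero weight alternates between `g < f` and `f < g`, so monotonicity forces one of
the two to grow by at least one at every step. -/
lemma card_le_of_flagCount_ne_zero {p : Finset α → R} {f g : Finset α → ℕ} (hf : Monotone f)
    (hg : Monotone g) {T : Finset α}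
    (hodd : ∀ t ⊆ T, Odd t.card → p t ≠ 0 → g t < f t)
    (heven : ∀ t ⊆ T, t.Nonempty → Even t.card → p t ≠ 0 → f t < g t)
    (hT : flagCount p T ≠ 0) :
    (Odd T.card → T.card ≤ f T) ∧ (Even T.card → T.card ≤ g T) := by
  induction T using Finset.strongInduction with
  | H T ih =>
    rcases T.eq_empty_or_nonempty with rfl | hne
    · simp
    rw [flagCount_of_nonempty p hne] at hT
    have hpT : p T ≠ 0 := left_ne_zero_of_mul hT
    obtain ⟨v, hv, hflag⟩ := Finset.exists_ne_zero_of_sum_ne_zero (right_ne_zero_of_mul hT)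
    have hsub : T.erase v ⊆ T := Finset.erase_subset v T
    have hfT : f (T.erase v) ≤ f T := hf hsub
    have hgT : g (T.erase v) ≤ g T := hg hsub
    obtain ⟨ihodd, iheven⟩ := ih _ (Finset.erase_ssubset hv) (fun t ht => hodd t (ht.trans hsub))
      (fun t ht => heven t (ht.trans hsub)) hflag
    rw [← Finset.card_erase_add_one hv, Nat.odd_add_one, Nat.even_add_one, Nat.not_odd_iff_even,
      Nat.not_even_iff_odd]
    refine ⟨fun he => ?_, fun ho => ?_⟩
    · have := hodd T subset_rfl (by rw [← Finset.card_erase_add_one hv]; exact he.add_one) hpT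
      have := iheven he
      omega
    · have := heven T subset_rfl hne (by rw [← Finset.card_erase_add_one hv]; exact ho.add_one) hpT
      have := ihodd ho
      omega

end CommSemiring

section CharTwo

variable [CommRing R] [CharP R 2]

lemma sum_sum_erase_erase_eq_zero (G : Finset α → R) (T : Finset α) :
    ∑ v ∈ T, ∑ u ∈ T.erase v, G ((T.erase v).erase u) = 0 := by
  rw [Finset.sum_sigma']
  refine Finset.sum_involution (fun a _ => ⟨a.2, a.1⟩) ?_ ?_ ?_ fun _ _ => rfl
  · rintro ⟨v, u⟩ -
    simp only [Finset.erase_right_comm, CharTwo.add_self_eq_zero]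
  · rintro ⟨v, u⟩ h - heq
    simp_all
  · rintro ⟨v, u⟩ h
    simp_all [eq_comm]

lemma sum_powerset_eq_zero_of_insert_eq {F : Finset α → R} {T : Finset α} {v : α} (hv : v ∈ T)
    (h : ∀ s, F (insert v s) = F s) : ∑ s ∈ T.powerset, F s = 0 := by
  rw [← Finset.insert_erase hv, Finset.sum_powerset_insert (Finset.notMem_erase v T)]
  simp only [h, CharTwo.add_self_eq_zero]

lemma sum_flagCount_one_add_erase (p : Finset α → R) (T : Finset α) :
    ∑ v ∈ T, flagCount (1 + p) (T.erase v) = ∑ v ∈ T, flagCount p (T.erase v) := by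
  induction T using Finset.strongInduction with
  | H T ih =>
    rcases le_or_gt T.card 1 with hT | hT
    · refine Finset.sum_congr rfl fun v hv => ?_
      have herase : T.erase v = ∅ := by
        rw [← Finset.card_eq_zero, Finset.card_erase_of_mem hv]; omega
      rw [herase, flagCount_empty, flagCount_empty]
    · rw [← CharTwo.add_eq_zero, ← Finset.sum_add_distrib,
        ← sum_sum_erase_erase_eq_zero (flagCount p) T]
      refine Finset.sum_congr rfl fun v hv => ?_
      have hne : (T.erase v).Nonempty := by
        rw [← Finset.card_pos, Finset.card_erase_of_mem hv]; omega
      rw [flagCount_of_nonempty _ hne, flagCount_of_nonempty _ hne,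
        ih _ (Finset.erase_ssubset hv), ← add_mul, Pi.add_apply, Pi.one_apply,
        CharTwo.add_cancel_right, one_mul]

lemma flagCount_add_flagCount_one_add (p : Finset α → R) {T : Finset α} (hT : T.Nonempty) :
    flagCount p T + flagCount (1 + p) T = ∑ v ∈ T, flagCount p (T.erase v) := by
  rw [flagCount_of_nonempty _ hT, flagCount_of_nonempty _ hT, sum_flagCount_one_add_erase,
    ← add_mul, Pi.add_apply, Pi.one_apply, add_comm, CharTwo.add_cancel_right, one_mul]

end CharTwo

end FlagCount

section Tucker

variable {α : Type*} [DecidableEq α]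

/-- Signed subsets of `T`, encoded as pairs of a positive and a negative part: the antipode is
`Prod.swap` and inclusion of signed sets is the product order. -/
def IsSigned (T : Finset α) (x : Finset α × Finset α) : Prop :=
  Disjoint x.1 x.2 ∧ x.1 ∪ x.2 ⊆ T

lemma IsSigned.swap {T : Finset α} {x : Finset α × Finset α} (hx : IsSigned T x) :
    IsSigned T x.swap :=
  ⟨hx.1.symm, (Finset.union_comm _ _).trans_subset hx.2⟩

/-- The signed set with support `t` that is positive on `s` and negative off `s`. -/
def signing (s t : Finset α) : Finset α × Finset α :=
  (t ∩ s, t \ s)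

lemma signing_mono (s : Finset α) : Monotone (signing s) := fun _ _ h =>
  ⟨Finset.inter_subset_inter_right h, Finset.sdiff_subset_sdiff h subset_rfl⟩

lemma signing_fst_union_snd (s t : Finset α) : (signing s t).1 ∪ (signing s t).2 = t := by
  rw [Finset.union_comm]
  exact Finset.sdiff_union_inter t s

lemma isSigned_signing (s : Finset α) {t T : Finset α} (h : t ⊆ T) : IsSigned T (signing s t) :=
  ⟨(Finset.disjoint_sdiff_inter t s).symm, (signing_fst_union_snd s t).trans_subset h⟩

lemma signing_sdiff (s : Finset α) {t T : Finset α} (h : t ⊆ T) :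
    signing (T \ s) t = (signing s t).swap := by
  ext i <;> simp only [signing, Prod.swap_prod_mk, Finset.mem_inter, Finset.mem_sdiff]
  · exact ⟨fun hi => ⟨hi.1, hi.2.2⟩, fun hi => ⟨hi.1, h hi.1, hi.2⟩⟩
  · exact ⟨fun hi => ⟨hi.1, of_not_not fun his => hi.2 ⟨h hi.1, his⟩⟩,
      fun hi => ⟨hi.1, fun hi' => hi'.2 hi.2⟩⟩

lemma signing_insert_of_notMem (s : Finset α) {t : Finset α} {v : α} (hv : v ∉ t) :
    signing (insert v s) t = signing s t := by
  rw [signing, signing, Finset.inter_insert_of_notMem hv, Finset.sdiff_insert_of_notMem hv]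

lemma flagCount_signing_sdiff {R : Type*} [CommSemiring R] {p : Finset α × Finset α → R}
    {T : Finset α}
    (hp : ∀ x, IsSigned T x → (x.1 ∪ x.2).Nonempty → p x.swap = 1 + p x) (s : Finset α) :
    flagCount (p ∘ signing (T \ s)) T = flagCount (1 + p ∘ signing s) T :=
  flagCount_congr fun t ht hne => by
    rw [Function.comp_apply, signing_sdiff s ht,
      hp _ (isSigned_signing s ht) (by rwa [signing_fst_union_snd])]
    rfl

/-- On `insert a T`, the signing by `insert a (T \ s)` is antipodal to the one by `s`, so modulo 2
the two together count the flags that miss one element just below the top. Those missing `v ∈ T`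
cancel, because the sign of `v` is then free; those missing `a` are counted by induction. -/
theorem sum_flagCount_signing {R : Type*} [CommRing R] [CharP R 2]
    {p : Finset α × Finset α → R} {T : Finset α}
    (hp : ∀ x, IsSigned T x → (x.1 ∪ x.2).Nonempty → p x.swap = 1 + p x) :
    ∑ s ∈ T.powerset, flagCount (p ∘ signing s) T = 1 := by
  induction T using Finset.induction_on with
  | empty => rw [Finset.powerset_empty, Finset.sum_singleton, flagCount_empty]
  | insert a T ha ih =>
    have hpair : ∀ s ∈ T.powerset,
        flagCount (p ∘ signing s) (insert a T) +
            flagCount (p ∘ signing (insert a (T \ s))) (insert a T) =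
          flagCount (p ∘ signing s) T +
            ∑ v ∈ T, flagCount (p ∘ signing s) ((insert a T).erase v) := by
      intro s hs
      rw [← Finset.insert_sdiff_of_notMem T fun has => ha (Finset.mem_powerset.1 hs has),
        flagCount_signing_sdiff hp,
        flagCount_add_flagCount_one_add _ (Finset.insert_nonempty a T), Finset.sum_insert ha,
        Finset.erase_insert ha]
    have hreflect : ∑ s ∈ T.powerset, flagCount (p ∘ signing (insert a s)) (insert a T) =
        ∑ s ∈ T.powerset, flagCount (p ∘ signing (insert a (T \ s))) (insert a T) := by
      refine Finset.sum_nbij' (T \ ·) (T \ ·) ?_ ?_ ?_ ?_ ?_ <;>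
        simp +contextual [Finset.sdiff_subset]
    have hcancel : ∀ v ∈ T,
        ∑ s ∈ T.powerset, flagCount (p ∘ signing s) ((insert a T).erase v) = 0 := fun v hv =>
      sum_powerset_eq_zero_of_insert_eq hv fun s => flagCount_congr fun t ht _ =>
        congrArg p (signing_insert_of_notMem s fun hvt => Finset.notMem_erase v _ (ht hvt))
    have hpT : ∀ x, IsSigned T x → (x.1 ∪ x.2).Nonempty → p x.swap = 1 + p x := fun x hx =>
      hp x ⟨hx.1, hx.2.trans (Finset.subset_insert a T)⟩
    rw [Finset.sum_powerset_insert ha, hreflect, ← Finset.sum_add_distrib,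
      Finset.sum_congr rfl hpair, Finset.sum_add_distrib, ih hpT, Finset.sum_comm,
      Finset.sum_eq_zero hcancel, add_zero]

/-- The octahedral Tucker lemma, for the labelling of `x` by the larger of `A x` and `A x.swap`
together with the sign that tells which one it is. -/
theorem exists_card_le_of_monotone {A : Finset α × Finset α → ℕ} {T : Finset α} (hA : Monotone A)
    (hswap : ∀ x, IsSigned T x → (x.1 ∪ x.2).Nonempty → A x.swap ≠ A x) :
    ∃ x, IsSigned T x ∧ T.card ≤ A x := by
  let p : Finset α × Finset α → ZMod 2 := fun x =>
    if A x.swap < A x ↔ Odd (x.1 ∪ x.2).card then 1 else 0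
  have hp : ∀ x, IsSigned T x → (x.1 ∪ x.2).Nonempty → p x.swap = 1 + p x := by
    intro x hx hne
    have hiff : (A x < A x.swap ↔ Odd (x.1 ∪ x.2).card) ↔
        ¬(A x.swap < A x ↔ Odd (x.1 ∪ x.2).card) := by
      have := hswap x hx hne
      grind
    simp only [p, Prod.swap_swap, Prod.fst_swap, Prod.snd_swap, Finset.union_comm x.2 x.1, hiff]
    split_ifs <;> rfl
  obtain ⟨s, -, hs⟩ := Finset.exists_ne_zero_of_sum_ne_zero
    ((sum_flagCount_signing hp).trans_ne one_ne_zero)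
  have hselect : ∀ t, (p ∘ signing s) t ≠ 0 →
      (A (signing s t).swap < A (signing s t) ↔ Odd t.card) := by
    intro t ht
    simpa [p, signing_fst_union_snd] using ht
  have hcard := card_le_of_flagCount_ne_zero (f := fun t => A (signing s t))
    (g := fun t => A (signing s t).swap) (fun _ _ h => hA (signing_mono s h))
    (fun _ _ h => hA (Prod.swap_le_swap.2 (signing_mono s h)))
    (fun t _ hodd ht => (hselect t ht).2 hodd)
    (fun t hsub hne heven ht => lt_of_le_of_ne
      (not_lt.1 fun hlt => Nat.not_odd_iff_even.2 heven ((hselect t ht).1 hlt))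
      (hswap _ (isSigned_signing s hsub) (by rwa [signing_fst_union_snd])).symm) hs
  rcases Nat.even_or_odd T.card with heven | hodd
  · exact ⟨_, (isSigned_signing s subset_rfl).swap, hcard.2 heven⟩
  · exact ⟨_, isSigned_signing s subset_rfl, hcard.1 hodd⟩

/-- Each obstruction `B j`, holding on at most one side of an antipodal pair, can be absorbed into
the potential `A` by giving the obstructed signed sets a new top value. -/
theorem card_lt_add_card_of_obstructions {ι : Type*} {T : Finset α}
    {B : ι → Finset α × Finset α → Prop} (hB : ∀ j, Monotone (B j))
    (hBswap : ∀ j x, IsSigned T x → B j x → ¬B j x.swap) (J : Finset ι)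
    {A : Finset α × Finset α → ℕ} {N : ℕ} (hA : Monotone A) (hAN : ∀ x, A x < N)
    (hAswap : ∀ x, IsSigned T x → (x.1 ∪ x.2).Nonempty →
      (∀ j ∈ J, ¬B j x ∧ ¬B j x.swap) → A x.swap ≠ A x) :
    T.card < N + J.card := by
  classical
  induction J using Finset.induction_on generalizing A N with
  | empty =>
    obtain ⟨x, -, hTA⟩ := exists_card_le_of_monotone hA fun x hx hne => hAswap x hx hne (by simp)
    exact hTA.trans_lt (hAN x)
  | insert k J hk ih =>
    rw [Finset.card_insert_of_notMem hk, ← add_assoc, add_right_comm]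
    refine ih (A := fun x => if B k x then N else A x) (fun x y hxy => ?_) (fun x => ?_)
      fun x hx hne hJ => ?_
    · have := hA hxy
      have := hAN x
      have : B k x → B k y := hB k hxy
      grind
    · have := hAN x
      grind
    · have := hAN x
      have := hAN x.swap
      have := hBswap k x hx
      have := hAswap x hx hne
      grind

end Tucker

section Alternating

/-- `P` and `N` alternate below `n`, starting with an element of `P`: every initial segment contains
as many elements of `P` as of `N`, or one more. -/
def AlternatesBelow (n : ℕ) (P N : Finset ℕ) : Prop :=
  ∀ k ≤ n, Nat.count (· ∈ N) k ≤ Nat.count (· ∈ P) k ∧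
    Nat.count (· ∈ P) k ≤ Nat.count (· ∈ N) k + 1

/-- The length of the longest sequence of increasing numbers below `k` that are alternately in `P`
and in `N`, starting in `P`, computed greedily. -/
def altLen (P N : Finset ℕ) : ℕ → ℕ
  | 0 => 0
  | k + 1 => altLen P N k + if k ∈ (if Even (altLen P N k) then P else N) then 1 else 0

lemma altLen_mono {P N P' N' : Finset ℕ} (hP : P ⊆ P') (hN : N ⊆ N') (k : ℕ) :
    altLen P N k ≤ altLen P' N' k := by
  induction k with
  | zero => exact le_rfl
  | succ k ih => grind [altLen]

lemma half_altLen_le_count (P N : Finset ℕ) (k : ℕ) :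
    (altLen P N k + 1) / 2 ≤ Nat.count (· ∈ P) k ∧ altLen P N k / 2 ≤ Nat.count (· ∈ N) k := by
  induction k with
  | zero => simp [altLen]
  | succ k ih => simp only [Nat.count_succ, altLen]; grind

lemma altLen_add_count_le {j k : ℕ} (hjk : j ≤ k) (P N : Finset ℕ) :
    altLen P N k + (Nat.count (· ∈ P) j + Nat.count (· ∈ N) j) ≤
      altLen P N j + (Nat.count (· ∈ P) k + Nat.count (· ∈ N) k) := by
  induction k, hjk using Nat.le_induction with
  | base => exact le_rfl
  | succ k _ ih => simp only [Nat.count_succ, altLen]; grind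

lemma alternatesBelow_of_count_le_altLen {n : ℕ} {P N : Finset ℕ}
    (h : Nat.count (· ∈ P) n + Nat.count (· ∈ N) n ≤ altLen P N n) : AlternatesBelow n P N := by
  intro k hk
  have := half_altLen_le_count P N k
  have := altLen_add_count_le hk P N
  omega

lemma odd_altLen_add_altLen_comm {P N : Finset ℕ} (hdisj : Disjoint P N) {k : ℕ}
    (hk : 0 < Nat.count (· ∈ P) k + Nat.count (· ∈ N) k) :
    Odd (altLen P N k + altLen N P k) := by
  induction k with
  | zero => simp at hk
  | succ k ih =>
    have hnot : k ∈ P → k ∉ N := fun h => Finset.disjoint_left.1 hdisj h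
    rcases Nat.eq_zero_or_pos (Nat.count (· ∈ P) k + Nat.count (· ∈ N) k) with h0 | hpos
    · have hPN := half_altLen_le_count P N k
      have hNP := half_altLen_le_count N P k
      have hPN0 : altLen P N k = 0 := by omega
      have hNP0 : altLen N P k = 0 := by omega
      simp only [Nat.count_succ] at hk
      simp only [altLen, hPN0, hNP0]
      grind
    · have := ih hpos
      have heven : Even (altLen N P k) ↔ ¬Even (altLen P N k) := by grind
      simp only [altLen, heven]
      grind

lemma count_mem_eq_card {S : Finset ℕ} {n : ℕ} (hS : S ⊆ Finset.range n) :
    Nat.count (· ∈ S) n = S.card := by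
  rw [Nat.count_eq_card_filter_range, Finset.filter_mem_eq_inter, Finset.inter_eq_right.2 hS]

lemma altLen_comm_ne {n : ℕ} {P N : Finset ℕ} (hPN : IsSigned (Finset.range n) (P, N))
    (hne : (P ∪ N).Nonempty) : altLen N P n ≠ altLen P N n := by
  have hpos : 0 < Nat.count (· ∈ P) n + Nat.count (· ∈ N) n := by
    rw [count_mem_eq_card (Finset.union_subset_left hPN.2),
      count_mem_eq_card (Finset.union_subset_right hPN.2), ← Finset.card_union_of_disjoint hPN.1]
    exact hne.card_pos
  have := odd_altLen_add_altLen_comm hPN.1 hpos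
  grind

namespace AlternatesBelow

variable {n i : ℕ} {P N : Finset ℕ}

lemma succ_mod_notMem_snd (h : AlternatesBelow n P N) (hPN : IsSigned (Finset.range n) (P, N))
    (hi : i ∈ N) : (i + 1) % n ∉ N := by
  intro hi'
  have hnot : ∀ k ∈ N, k ∉ P := fun k hk => Finset.disjoint_right.1 hPN.1 hk
  have hin : i < n := Finset.mem_range.1 (Finset.union_subset_right hPN.2 hi)
  rcases (Nat.add_one_le_iff.2 hin).eq_or_lt with hlast | hlt
  · rw [hlast, Nat.mod_self] at hi'
    have := h 1 (by omega)
    simp [Nat.count_succ, hi', hnot 0 hi'] at this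
  · rw [Nat.mod_eq_of_lt hlt] at hi'
    have := h i (by omega)
    have := h (i + 1 + 1) hlt
    simp only [Nat.count_succ, hi, hi', hnot _ hi, hnot _ hi', if_true, if_false] at this
    omega

lemma eq_last_of_cyclic_edge_fst (h : AlternatesBelow n P N) (hdisj : Disjoint P N) (hin : i < n)
    (hi : i ∈ P) (hi' : (i + 1) % n ∈ P) :
    i + 1 = n ∧ Nat.count (· ∈ N) n < Nat.count (· ∈ P) n := by
  have hnot : ∀ k ∈ P, k ∉ N := fun k hk => Finset.disjoint_left.1 hdisj hk
  have hcount := h i hin.le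
  rcases (Nat.add_one_le_iff.2 hin).eq_or_lt with hlast | hlt
  · refine ⟨hlast, ?_⟩
    rw [← hlast]
    simp only [Nat.count_succ, hi, hnot _ hi, if_true, if_false]
    omega
  · rw [Nat.mod_eq_of_lt hlt] at hi'
    have := h (i + 1 + 1) hlt
    simp only [Nat.count_succ, hi, hi', hnot _ hi, hnot _ hi', if_true, if_false] at this
    omega

lemma card_cyclic_edges_fst_le (h : AlternatesBelow n P N) (hdisj : Disjoint P N) :
    ((Finset.range n).filter fun i => i ∈ P ∧ (i + 1) % n ∈ P).card ≤
      Nat.count (· ∈ P) n - Nat.count (· ∈ N) n := by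
  have hlast : ∀ i ∈ (Finset.range n).filter fun i => i ∈ P ∧ (i + 1) % n ∈ P,
      i + 1 = n ∧ Nat.count (· ∈ N) n < Nat.count (· ∈ P) n := by
    intro i hi
    obtain ⟨hin, hiP, hiP'⟩ := Finset.mem_filter.1 hi
    exact h.eq_last_of_cyclic_edge_fst hdisj (Finset.mem_range.1 hin) hiP hiP'
  rcases Finset.eq_empty_or_nonempty
    ((Finset.range n).filter fun i => i ∈ P ∧ (i + 1) % n ∈ P) with hempty | ⟨i, hi⟩
  · rw [hempty, Finset.card_empty]
    exact Nat.zero_le _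
  · have hone := Finset.card_le_one.2 fun a ha b hb =>
      Nat.succ_injective ((hlast a ha).1.trans (hlast b hb).1.symm)
    have := (hlast i hi).2
    omega

end AlternatesBelow

end Alternating

section Load

variable {α : Type*} [DecidableEq α] {W P N S : Finset α} {r : α}

/-- Twice the number of elements of `S` in `W`, plus one if `S` contains the tie-breaker `r ∈ W`.
Two disjoint sets cannot both have load greater than `W.card`, and if neither has, then they cannot
cover `W`. -/
def load (W : Finset α) (r : α) (S : Finset α) : ℕ :=
  2 * (S ∩ W).card + (S ∩ {r}).card

lemma load_mono (W : Finset α) (r : α) : Monotone (load W r) := fun _ _ h => by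
  unfold load
  gcongr

lemma card_union_inter_of_disjoint (h : Disjoint P N) (U : Finset α) :
    ((P ∪ N) ∩ U).card = (P ∩ U).card + (N ∩ U).card := by
  rw [Finset.union_inter_distrib_right, Finset.card_union_of_disjoint
    (h.mono Finset.inter_subset_left Finset.inter_subset_left)]

lemma load_union (h : Disjoint P N) (W : Finset α) (r : α) :
    load W r (P ∪ N) = load W r P + load W r N := by
  simp only [load, card_union_inter_of_disjoint h]
  ring

lemma load_le (W : Finset α) (r : α) (S : Finset α) : load W r S ≤ 2 * W.card + 1 := by
  have hW : (S ∩ W).card ≤ W.card := Finset.card_le_card Finset.inter_subset_right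
  have hr : (S ∩ {r}).card ≤ 1 := Finset.card_le_card Finset.inter_subset_right
  unfold load
  omega

lemma card_inter_lt_of_load_le (hr : r ∈ W) (h : load W r S ≤ 2 * W.card) :
    (S ∩ W).card < W.card := by
  refine Finset.card_lt_card (Finset.inter_subset_right.ssubset_of_ne fun hW => ?_)
  have hrS : r ∈ S := Finset.inter_eq_right.1 hW hr
  simp [load, hW, hrS] at h

end Load

section Partition

variable {α ι : Type*} [DecidableEq α] [Fintype ι] {S : Finset α} {V : ι → Finset α}

lemma sum_card_inter_add_one (hdisj : Pairwise (Function.onFun Disjoint V))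
    (hS : S ⊆ Finset.univ.biUnion V) :
    ∑ j, ((S ∩ V j).card + 1) = S.card + Fintype.card ι := by
  rw [Finset.sum_add_distrib, ← Finset.card_biUnion fun j _ k _ hjk =>
      (hdisj hjk).mono Finset.inter_subset_right Finset.inter_subset_right,
    ← Finset.inter_biUnion, Finset.inter_eq_left.2 hS, ← Finset.card_eq_sum_ones,
    Finset.card_univ]

lemma card_add_card_le_of_card_inter_lt (hdisj : Pairwise (Function.onFun Disjoint V))
    (hS : S ⊆ Finset.univ.biUnion V) (hlt : ∀ j, (S ∩ V j).card < (V j).card) :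
    S.card + Fintype.card ι ≤ (Finset.univ.biUnion V).card := by
  rw [← sum_card_inter_add_one hdisj hS, Finset.card_biUnion fun j _ k _ hjk => hdisj hjk]
  exact Finset.sum_le_sum fun j _ => hlt j

lemma card_inter_add_one_eq_of_card_inter_lt (hdisj : Pairwise (Function.onFun Disjoint V))
    (hS : S ⊆ Finset.univ.biUnion V) (hlt : ∀ j, (S ∩ V j).card < (V j).card)
    (hcard : (Finset.univ.biUnion V).card ≤ S.card + Fintype.card ι) (j : ι) :
    (S ∩ V j).card + 1 = (V j).card := by
  refine (Finset.sum_eq_sum_iff_of_le fun j _ => Nat.add_one_le_iff.2 (hlt j)).1 ?_ j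
    (Finset.mem_univ j)
  rw [sum_card_inter_add_one hdisj hS, ← Finset.card_biUnion fun j _ k _ hjk => hdisj hjk]
  exact (card_add_card_le_of_card_inter_lt hdisj hS hlt).antisymm hcard

end Partition

section FairSplit

variable {ι : Type*} [Fintype ι]

lemma exists_load_le_and_le_altLen (n : ℕ) (V : ι → Finset ℕ) (r : ι → ℕ) :
    ∃ P N, IsSigned (Finset.range n) (P, N) ∧
      (∀ j, load (V j) (r j) P ≤ (V j).card ∧ load (V j) (r j) N ≤ (V j).card) ∧
      n - Fintype.card ι ≤ altLen P N n := by
  classical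
  by_contra! hno
  have hpos : 0 < n - Fintype.card ι :=
    (Nat.zero_le _).trans_lt (hno ∅ ∅ (by simp [IsSigned]) (by simp [load]))
  have hexclusive : ∀ j (x : Finset ℕ × Finset ℕ), IsSigned (Finset.range n) x →
      (V j).card < load (V j) (r j) x.1 → ¬(V j).card < load (V j) (r j) x.2 := by
    intro j x hx
    have := load_union hx.1 (V j) (r j)
    have := load_le (V j) (r j) (x.1 ∪ x.2)
    omega
  have hcard := card_lt_add_card_of_obstructions (T := Finset.range n)
    (B := fun j x => (V j).card < load (V j) (r j) x.1)
    (fun j x y hxy hx => hx.trans_le (load_mono (V j) (r j) hxy.1)) hexclusive Finset.univ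
    (A := fun x => min (altLen x.1 x.2 n) (n - Fintype.card ι - 1)) (N := n - Fintype.card ι)
    (fun x y hxy => min_le_min_right _ (altLen_mono hxy.1 hxy.2 n))
    (fun x => (min_le_right _ _).trans_lt (by omega)) ?_
  · rw [Finset.card_range, Finset.card_univ] at hcard
    omega
  · intro x hx hne hload
    simp only [not_lt, Prod.fst_swap] at hload
    have hlt := hno x.1 x.2 hx fun j => hload j (Finset.mem_univ j)
    have hlt' := hno x.2 x.1 hx.swap fun j => (hload j (Finset.mem_univ j)).symm
    have := altLen_comm_ne hx hne
    simp only [Prod.fst_swap, Prod.snd_swap]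
    omega

theorem exists_alternating_fair_split {n : ℕ} {V : ι → Finset ℕ}
    (hcover : Finset.univ.biUnion V = Finset.range n)
    (hdisj : Pairwise (Function.onFun Disjoint V)) (hne : ∀ j, (V j).Nonempty) :
    ∃ P N, IsSigned (Finset.range n) (P, N) ∧ AlternatesBelow n P N ∧
      P.card + N.card + Fintype.card ι = n ∧
      ∀ j, (P ∩ V j).card + (N ∩ V j).card + 1 = (V j).card ∧
        (V j).card ≤ 2 * (P ∩ V j).card + 2 ∧ (V j).card ≤ 2 * (N ∩ V j).card + 2 := by
  choose r hr using hne
  obtain ⟨P, N, hPN, hload, hlen⟩ := exists_load_le_and_le_altLen n V r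
  have hdisjPN : Disjoint P N := hPN.1
  have hsub : P ∪ N ⊆ Finset.univ.biUnion V := hPN.2.trans_eq hcover.symm
  have hlt : ∀ j, ((P ∪ N) ∩ V j).card < (V j).card := fun j => by
    refine card_inter_lt_of_load_le (hr j) ?_
    rw [load_union hdisjPN]
    linarith [hload j]
  have hle := card_add_card_le_of_card_inter_lt hdisj hsub hlt
  have hunion := Finset.card_union_of_disjoint hdisjPN
  have hcountP : Nat.count (· ∈ P) n = P.card :=
    count_mem_eq_card (Finset.union_subset_left hPN.2)
  have hcountN : Nat.count (· ∈ N) n = N.card :=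
    count_mem_eq_card (Finset.union_subset_right hPN.2)
  have hhalf := half_altLen_le_count P N n
  have hV : (Finset.univ.biUnion V).card = n := by rw [hcover, Finset.card_range]
  refine ⟨P, N, hPN, alternatesBelow_of_count_le_altLen (by omega), by omega, fun j => ?_⟩
  have hone := card_inter_add_one_eq_of_card_inter_lt hdisj hsub hlt (by omega) j
  have hinter := card_union_inter_of_disjoint hdisjPN (V j)
  obtain ⟨hloadP, hloadN⟩ := hload j
  unfold load at hloadP hloadN
  omega

end FairSplit

/-- Corollary: fair splitting of a cycle on vertices `0,...,n-1`
(edges `{i, (i+1) % n}`). One of the two sets is independent of size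
`⌊(n-m)/2⌋`; the other induces at most `⌈(n-m)/2⌉ - ⌊(n-m)/2⌋` edges. -/
theorem fair_cycle_split (n m : ℕ) (hn : 3 ≤ n) (V : Fin m → Finset ℕ)
    (hcover : Finset.univ.biUnion V = Finset.range n)
    (hdisj : ∀ j k : Fin m, j ≠ k → Disjoint (V j) (V k))
    (hne : ∀ j, (V j).Nonempty) :
    ∃ S₁ S₂ : Finset ℕ,
      S₁ ⊆ Finset.range n ∧ S₂ ⊆ Finset.range n ∧
      Disjoint S₁ S₂ ∧
      (∀ j, (S₁ ∩ V j).card + (S₂ ∩ V j).card = (V j).card - 1) ∧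
      S₁.card ≤ S₂.card + 1 ∧ S₂.card ≤ S₁.card + 1 ∧
      (∀ j, ((V j).card : ℚ) / 2 - 1 ≤ ((S₁ ∩ V j).card : ℚ) ∧
            ((V j).card : ℚ) / 2 - 1 ≤ ((S₂ ∩ V j).card : ℚ)) ∧
      (((∀ i ∈ S₁, (i + 1) % n ∉ S₁) ∧ S₁.card = (n - m) / 2 ∧
          ((Finset.range n).filter (fun i => i ∈ S₂ ∧ (i + 1) % n ∈ S₂)).card ≤
            (n - m + 1) / 2 - (n - m) / 2) ∨
       ((∀ i ∈ S₂, (i + 1) % n ∉ S₂) ∧ S₂.card = (n - m) / 2 ∧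
          ((Finset.range n).filter (fun i => i ∈ S₁ ∧ (i + 1) % n ∈ S₁)).card ≤
            (n - m + 1) / 2 - (n - m) / 2)) := by
  obtain ⟨P, N, hPN, halt, hcard, hfair⟩ := exists_alternating_fair_split hcover
    (fun j k => hdisj j k) hne
  have hP : P ⊆ Finset.range n := Finset.union_subset_left hPN.2
  have hN : N ⊆ Finset.range n := Finset.union_subset_right hPN.2
  have hbalance := halt n le_rfl
  have hedges := halt.card_cyclic_edges_fst_le hPN.1
  rw [count_mem_eq_card hP, count_mem_eq_card hN] at hbalance hedges
  rw [Fintype.card_fin] at hcard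
  have half_le : ∀ a b : ℕ, a ≤ 2 * b + 2 → (a : ℚ) / 2 - 1 ≤ b := fun a b hab => by
    have : (a : ℚ) ≤ 2 * b + 2 := mod_cast hab
    linarith
  refine ⟨N, P, hN, hP, hPN.1.symm, fun j => ?_, by omega, by omega,
    fun j => ⟨half_le _ _ (hfair j).2.2, half_le _ _ (hfair j).2.1⟩,
    Or.inl ⟨fun i hi => halt.succ_mod_notMem_snd hPN hi, by omega, by omega⟩⟩
  have := (hfair j).1
  omega
end

section
/- If x and y are sign vectors in {+,-,0}^n \ {0} with x ⪯ y and alt(x) = alt(y), then the first nonzero coordinates of x and y are equal. -/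
/-- `altSeq x` is the maximum length of an alternating subsequence of the sign
vector `x`: a subsequence all of whose terms are nonzero and in which any two
consecutive terms differ. -/
noncomputable def altSeq {n : ℕ} (x : Fin n → SignType) : ℕ :=
  sSup {k | ∃ l : List SignType, l.Sublist (List.ofFn x) ∧
    (∀ a ∈ l, a ≠ 0) ∧ l.Chain' (· ≠ ·) ∧ l.length = k}

/-!
The alternation number of a sequence is the number of constant runs of its subsequence of nonzero
terms. If `x ⪯ y`, then the nonzero terms of `x` form a subsequence of those of `y`; if moreover
the two begin with different terms, then all nonzero terms of `x` come after the first nonzero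
term of `y`, which therefore contributes an additional run to `y`.
-/

section Destutter

variable {α : Type*}

theorem head?_destutter' (R : α → α → Prop) [DecidableRel R] (a : α) (l : List α) :
    (l.destutter' R a).head? = some a := by
  induction l with
  | nil => rfl
  | cons b l ih =>
    by_cases hab : R a b
    · rw [List.destutter'_cons_pos l hab, List.head?_cons]
    · rwa [List.destutter'_cons_neg l hab]

theorem head?_destutter (R : α → α → Prop) [DecidableRel R] (l : List α) :
    (l.destutter R).head? = l.head? := by
  cases l with
  | nil => rfl
  | cons a l => exact head?_destutter' R a l

variable [DecidableEq α]

theorem length_destutter_ne_lt_of_sublist_of_head?_ne {a : α} {l₁ l₂ : List α}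
    (hsub : l₁.Sublist l₂) (hhead : l₁.head? ≠ some a) :
    (l₁.destutter (· ≠ ·)).length < ((a :: l₂).destutter (· ≠ ·)).length := by
  have hchain : (a :: l₁.destutter (· ≠ ·)).IsChain (· ≠ ·) := by
    refine List.isChain_cons.2 ⟨?_, l₁.isChain_destutter _⟩
    rintro b hb rfl
    exact hhead (head?_destutter (· ≠ ·) l₁ ▸ hb)
  exact hchain.length_le_length_destutter_ne (((l₁.destutter_sublist _).trans hsub).cons_cons a)

theorem head?_eq_of_sublist_of_length_destutter_ne_le {l₁ l₂ : List α} (hsub : l₁.Sublist l₂)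
    (hlen : (l₂.destutter (· ≠ ·)).length ≤ (l₁.destutter (· ≠ ·)).length) :
    l₁.head? = l₂.head? := by
  cases hsub with
  | slnil => rfl
  | cons_cons a _ => rfl
  | cons a hsub =>
    by_contra hhead
    exact (length_destutter_ne_lt_of_sublist_of_head?_ne hsub hhead).not_ge hlen

end Destutter

section FilterMap

variable {ι α : Type*} {p : α → Bool} {x y : ι → α}

theorem filter_map_sublist_filter_map {l : List ι} (h : ∀ i ∈ l, p (x i) → x i = y i) :
    ((l.map x).filter p).Sublist ((l.map y).filter p) := by
  induction l with
  | nil => exact .slnil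
  | cons i l ih =>
    obtain ⟨hi, hl⟩ := List.forall_mem_cons.1 h
    rw [List.map_cons, List.map_cons]
    by_cases hpi : p (x i)
    · rw [← hi hpi, List.filter_cons_of_pos hpi, List.filter_cons_of_pos hpi]
      exact (ih hl).cons_cons _
    · rw [List.filter_cons_of_neg hpi]
      exact (ih hl).trans ((List.sublist_cons_self _ _).filter p)

end FilterMap

section AltNumber

variable {α : Type*} [Zero α]

/-- The alternation number of a list over a type with zero: the maximum length of a sublist whose
terms are nonzero and in which consecutive terms differ. For a list of signs this is the notion
that `altSeq` expresses for sign vectors. -/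
noncomputable def altNumber (l : List α) : ℕ :=
  sSup {k | ∃ s : List α, s.Sublist l ∧
    (∀ a ∈ s, a ≠ 0) ∧ s.IsChain (· ≠ ·) ∧ s.length = k}

theorem altSeq_eq_altNumber_ofFn {n : ℕ} (x : Fin n → SignType) :
    altSeq x = altNumber (List.ofFn x) :=
  rfl

variable [DecidableEq α]

theorem altNumber_eq_length_destutter_filter (l : List α) :
    altNumber l = ((l.filter (· ≠ 0)).destutter (· ≠ ·)).length := by
  refine IsGreatest.csSup_eq ⟨⟨(l.filter (· ≠ 0)).destutter (· ≠ ·), ?_, ?_, ?_, rfl⟩, ?_⟩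
  · exact (List.destutter_sublist _ _).trans List.filter_sublist
  · intro a ha
    simpa using List.of_mem_filter ((List.destutter_sublist _ _).subset ha)
  · exact List.isChain_destutter _ _
  · rintro _ ⟨s, hsub, hne, hchain, rfl⟩
    have hfilter : s.filter (· ≠ 0) = s := List.filter_eq_self.2 (by simpa using hne)
    exact hchain.length_le_length_destutter_ne (hfilter ▸ hsub.filter (· ≠ 0))

theorem head?_filter_ne_zero_ofFn {n : ℕ} {x : Fin n → α} {i : Fin n} (hi : x i ≠ 0)
    (hlt : ∀ k < i, x k = 0) : ((List.ofFn x).filter (· ≠ 0)).head? = some (x i) := by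
  rw [List.head?_filter, List.find?_ofFn_eq_some]
  exact ⟨by simpa using hi, i, rfl, fun k hk => by simpa using hlt k hk⟩

end AltNumber

theorem first_nonzero_eq_general {α : Type*} [Zero α] {n : ℕ} {x y : Fin n → α}
    (hle : ∀ i, x i ≠ 0 → x i = y i)
    (halt : altNumber (List.ofFn y) ≤ altNumber (List.ofFn x))
    {i j : Fin n} (hxi : x i ≠ 0) (hxi' : ∀ k < i, x k = 0)
    (hyj : y j ≠ 0) (hyj' : ∀ k < j, y k = 0) :
    x i = y j := by
  classical
  have hsub : ((List.ofFn x).filter (· ≠ 0)).Sublist ((List.ofFn y).filter (· ≠ 0)) := by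
    rw [List.ofFn_eq_map, List.ofFn_eq_map]
    exact filter_map_sublist_filter_map fun i _ hi => hle i (of_decide_eq_true hi)
  have hhead : ((List.ofFn x).filter (· ≠ 0)).head? = ((List.ofFn y).filter (· ≠ 0)).head? := by
    simp only [altNumber_eq_length_destutter_filter] at halt
    exact head?_eq_of_sublist_of_length_destutter_ne_le hsub halt
  rwa [head?_filter_ne_zero_ofFn hxi hxi', head?_filter_ne_zero_ofFn hyj hyj',
    Option.some_inj] at hhead

/-- If `x ⪯ y` are nonzero sign vectors with `alt x = alt y`, then their first
nonzero coordinates are equal. -/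
theorem first_nonzero_eq {n : ℕ} (x y : Fin n → SignType) (hx : x ≠ 0) (hy : y ≠ 0)
    (hle : ∀ i, x i ≠ 0 → x i = y i) (halt : altSeq x = altSeq y)
    (i j : Fin n) (hxi : x i ≠ 0) (hxi' : ∀ k, k < i → x k = 0)
    (hyj : y j ≠ 0) (hyj' : ∀ k, k < j → y k = 0) :
    x i = y j :=
  first_nonzero_eq_general hle (by simpa only [altSeq_eq_altNumber_ofFn] using halt.ge)
    hxi hxi' hyj hyj'
end

section
/- Let q be a positive integer and suppose a necklace (a sequence of n beads each colored with one of m colors) has a_j beads of color j, where the remainder of a_j modulo q lies in {0, 1, q-1} for every j. Then for any prescribed choice, for each j with q ∤ a_j, of which thieves receive ⌈a_j/q⌉ beads of color j (one thief if a_j ≡ 1, and q-1 thieves if a_j ≡ -1 mod q), there exists a fair q-splitting of the necklace using at most (q-1)m cuts realizing that choice. -/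
/-!
Among `q` thieves, a splitting with at most `(q - 1) m` cuts that is fair up to an error `C`
independent of the necklace always exists. For `q = p` prime, otherwise label every assignment with
at most `N = (p - 1) m` cuts by a color and a thief receiving far too much of that color,
equivariantly under cyclic shifts of the thieves. Starting from a constant assignment, prisms
between the assignments and their truncations build up a chain of dimension `N` representing the
periodic resolution of the cyclic group of order `p`. Its tuples consist of assignments with few
cuts which differ in few beads, so no color occurs with all `p` thieves among their labels, which
therefore form a face of the join of `m` boundaries of simplices. This complex of dimension `N - 1`
maps equivariantly to the cyclic group, which makes cocycles on it pair to `1` with the chain,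
although the chain becomes degenerate there for reasons of dimension. For composite `q` one splits
repeatedly.

To round, replace every bead by `q C + 1` copies before splitting. If each bead may go to any of the
thieves receiving one of its copies, then the number of cuts does not increase, and Hall's condition
for a prescribed number of beads per thief follows from the fairness of the splitting whenever the
prescription rounds fair shares with remainders `0`, `1` or `q - 1`.
-/

open Finset Function

/-- Cochains on tuples of vertices, of all degrees at once: a `k`-cochain is recorded by its values
on the lists of length `k + 1`. The empty list carries the augmentation, in degree `-1`. -/
abbrev TupleCochain (R V : Type*) := List V → R

namespace TupleCochain

variable {R V W L : Type*} [CommRing R]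

section Operators

/-- The pullback of cochains along a map of vertices. -/
def pullback (f : V → W) : TupleCochain R W →ₗ[R] TupleCochain R V :=
  LinearMap.funLeft R R (List.map f)

/-- The cochain `φ (v, ·)` on the link of the vertex `v`. -/
def link (v : V) : Module.End R (TupleCochain R V) :=
  LinearMap.funLeft R R (List.cons v)

/-- The simplicial coboundary, evaluated on a tuple as the alternating sum over its facets. -/
def coboundary : Module.End R (TupleCochain R V) where
  toFun φ l := ∑ i ∈ range l.length, (-1) ^ i * φ (l.eraseIdx i)
  map_add' φ ψ := by ext l; simp [mul_add, sum_add_distrib]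
  map_smul' a φ := by ext l; simp [mul_sum, mul_left_comm]

/-- The `i`-th top-dimensional simplex `(f v₀, …, f vᵢ, g vᵢ, …, g vₖ)` in the triangulated prism
between the images of the tuple `(v₀, …, vₖ)` under `f` and `g`. -/
def prismSimplex (f g : V → W) (l : List V) (i : ℕ) : List W :=
  (l.take (i + 1)).map f ++ (l.drop i).map g

/-- The prism operator: the cochain homotopy between the pullbacks along `f` and along `g`. -/
def prism (f g : V → W) : TupleCochain R W →ₗ[R] TupleCochain R V where
  toFun φ l := ∑ i ∈ range l.length, (-1) ^ i * φ (prismSimplex f g l i)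
  map_add' φ ψ := by ext l; simp [mul_add, sum_add_distrib]
  map_smul' a φ := by ext l; simp [mul_sum, mul_left_comm]

@[simp]
lemma pullback_apply (f : V → W) (φ : TupleCochain R W) (l : List V) :
    pullback f φ l = φ (l.map f) := rfl

@[simp]
lemma link_apply (v : V) (φ : TupleCochain R V) (l : List V) : link v φ l = φ (v :: l) := rfl

lemma coboundary_apply (φ : TupleCochain R V) (l : List V) :
    coboundary φ l = ∑ i ∈ range l.length, (-1) ^ i * φ (l.eraseIdx i) := rfl

lemma prism_apply (f g : V → W) (φ : TupleCochain R W) (l : List V) :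
    prism f g φ l = ∑ i ∈ range l.length, (-1) ^ i * φ (prismSimplex f g l i) := rfl

@[simp]
lemma coboundary_nil (φ : TupleCochain R V) : coboundary φ [] = 0 := rfl

@[simp]
lemma prism_nil (f g : V → W) (φ : TupleCochain R W) : prism f g φ [] = 0 := rfl

lemma coboundary_cons (φ : TupleCochain R V) (v : V) (l : List V) :
    coboundary φ (v :: l) = φ l - coboundary (link v φ) l := by
  simp [coboundary_apply, sum_range_succ', pow_succ, sub_eq_neg_add]

lemma prism_cons (f g : V → W) (φ : TupleCochain R W) (v : V) (l : List V) :
    prism f g φ (v :: l) = φ (f v :: g v :: l.map g) - prism f g (link (f v) φ) l := by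
  simp [prism_apply, prismSimplex, sum_range_succ', pow_succ, sub_eq_neg_add]

lemma link_coboundary (v : V) (φ : TupleCochain R V) :
    link v (coboundary φ) = φ - coboundary (link v φ) :=
  funext (coboundary_cons φ v)

lemma link_prism (f g : V → W) (v : V) (φ : TupleCochain R W) :
    link v (prism f g φ) = pullback g (link (g v) (link (f v) φ)) - prism f g (link (f v) φ) :=
  funext (prism_cons f g φ v)

lemma coboundary_congr {φ ψ : TupleCochain R V} {l : List V}
    (h : ∀ l', l'.Sublist l → φ l' = ψ l') : coboundary φ l = coboundary ψ l := by
  simp only [coboundary_apply, h _ (l.eraseIdx_sublist _)]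

lemma pullback_coboundary (f : V → W) (φ : TupleCochain R W) :
    pullback f (coboundary φ) = coboundary (pullback f φ) := by
  ext l
  simp [coboundary_apply, List.eraseIdx_map]

lemma coboundary_coboundary (φ : TupleCochain R V) : coboundary (coboundary φ) = 0 := by
  ext l
  induction l generalizing φ with
  | nil => rfl
  | cons v l ih => simp [coboundary_cons, link_coboundary, ih]

lemma prism_coboundary_add (f g : V → W) (φ : TupleCochain R W) :
    prism f g (coboundary φ) + coboundary (prism f g φ) = pullback g φ - pullback f φ := by
  ext l
  induction l generalizing φ with
  | nil => simp
  | cons v l ih =>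
    have ih_link := ih (link (f v) φ)
    simp only [Pi.add_apply, Pi.sub_apply, pullback_apply, link_apply] at ih_link
    simp only [Pi.add_apply, Pi.sub_apply, pullback_apply, prism_cons, coboundary_cons,
      link_coboundary, link_prism, map_sub, ← pullback_coboundary, List.map_cons, link_apply]
    linear_combination ih_link

lemma pullback_pow (g : V → V) (i : ℕ) :
    (pullback g : Module.End R (TupleCochain R V)) ^ i = pullback g^[i] := by
  induction i with
  | zero => ext φ l; simp
  | succ i ih =>
    rw [pow_succ', ih]
    ext φ l
    simp [iterate_succ]

end Operators

section Periodic

/-- The differentials `g - 1` (in even degrees `k`) and `1 + g + ⋯ + g ^ (p - 1)` (in odd degrees)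
of the periodic resolution of the cyclic group of order `p`, acting on cochains. -/
def periodicDiff (p : ℕ) (g : V → V) (k : ℕ) : Module.End R (TupleCochain R V) :=
  if Even k then pullback g - 1 else ∑ i ∈ range p, pullback g ^ i

variable {p : ℕ} {g : V → V} {k : ℕ}

lemma periodicDiff_of_even (hk : Even k) (φ : TupleCochain R V) (l : List V) :
    periodicDiff p g k φ l = φ (l.map g) - φ l := by
  simp [periodicDiff, hk]

lemma periodicDiff_of_odd (hk : Odd k) (φ : TupleCochain R V) (l : List V) :
    periodicDiff p g k φ l = ∑ i ∈ range p, φ (l.map g^[i]) := by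
  simp [periodicDiff, Nat.not_even_iff_odd.2 hk, pullback_pow]

lemma periodicDiff_add_two : (periodicDiff p g (k + 2) : Module.End R (TupleCochain R V)) =
    periodicDiff p g k := by
  simp [periodicDiff, Nat.even_add]

lemma periodicDiff_congr {φ ψ : TupleCochain R V} {l : List V}
    (h : ∀ i, φ (l.map g^[i]) = ψ (l.map g^[i])) :
    periodicDiff p g k φ l = periodicDiff p g k ψ l := by
  rcases Nat.even_or_odd k with hk | hk
  · have h₀ := h 0
    have h₁ := h 1
    simp only [iterate_zero, iterate_one, List.map_id] at h₀ h₁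
    rw [periodicDiff_of_even hk, periodicDiff_of_even hk, h₀, h₁]
  · simp only [periodicDiff_of_odd hk, h]

lemma periodicDiff_periodicDiff (hg : g^[p] = id) (φ : TupleCochain R V) :
    periodicDiff p g k (periodicDiff p g (k + 1) φ) = 0 := by
  have hp : (pullback g : Module.End R (TupleCochain R V)) ^ p = 1 := by
    ext φ l
    simp [pullback_pow, hg]
  rw [← Module.End.mul_apply]
  rcases Nat.even_or_odd k with hk | hk
  · simp [periodicDiff, hk, Nat.even_add_one, mul_geom_sum, hp]
  · simp [periodicDiff, Nat.not_even_iff_odd.2 hk, Nat.even_add_one, geom_sum_mul, hp]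

lemma periodicDiff_coboundary (φ : TupleCochain R V) :
    periodicDiff p g k (coboundary φ) = coboundary (periodicDiff p g k φ) := by
  rcases Nat.even_or_odd k with hk | hk
  · simp [periodicDiff, hk, pullback_coboundary]
  · simp [periodicDiff, Nat.not_even_iff_odd.2 hk, pullback_pow, pullback_coboundary]

lemma periodicDiff_pullback {σ : W → W} {f : V → W} (h : Semiconj f g σ) (φ : TupleCochain R W) :
    periodicDiff p g k (pullback f φ) = pullback f (periodicDiff p σ k φ) := by
  ext l
  rcases Nat.even_or_odd k with hk | hk
  · simp [periodicDiff_of_even hk, h.comp_eq]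
  · simp [periodicDiff_of_odd hk, (h.iterate_right _).comp_eq]

lemma periodicDiff_eq_zero_of_invariant [CharP R p] {φ : TupleCochain R V} {l : List V}
    (h : ∀ i, φ (l.map g^[i]) = φ l) : periodicDiff p g k φ l = 0 := by
  rcases Nat.even_or_odd k with hk | hk
  · simpa [periodicDiff_of_even hk, sub_eq_zero] using h 1
  · simp [periodicDiff_of_odd hk, h]

end Periodic

section FundamentalChain

/-- The sum of the prism operators along a sequence `O 0, …, O K` of self-maps: a cochain homotopy
between the pullbacks along `O 0` and along `O K`. -/
def prismSum (O : ℕ → V → V) (K : ℕ) : Module.End R (TupleCochain R V) :=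
  ∑ i ∈ range K, prism (O (i + 1)) (O i)

lemma prismSum_apply (O : ℕ → V → V) (K : ℕ) (φ : TupleCochain R V) (l : List V) :
    prismSum O K φ l = ∑ i ∈ range K, prism (O (i + 1)) (O i) φ l := by
  simp [prismSum]

lemma prismSum_coboundary (O : ℕ → V → V) (K : ℕ) (φ : TupleCochain R V) :
    prismSum O K (coboundary φ) =
      pullback (O 0) φ - pullback (O K) φ - coboundary (prismSum O K φ) := by
  rw [eq_sub_iff_add_eq]
  simp only [prismSum, LinearMap.sum_apply, map_sum, ← sum_add_distrib, prism_coboundary_add]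
  exact sum_range_sub' (fun i => pullback (O i) φ) K

/-- The tuples supporting the `k`-th `fundamentalChain`: they arise from the vertex `v₀` by `k`
passages to a simplex of one of the prisms between `O (i + 1)` and `O i`, interspersed with
applications of `g`. -/
inductive PrismTuple (g : V → V) (O : ℕ → V → V) (K : ℕ) (v₀ : V) : ℕ → List V → Prop
  | base : PrismTuple g O K v₀ 0 [v₀]
  | map {k : ℕ} {l : List V} : PrismTuple g O K v₀ k l → PrismTuple g O K v₀ k (l.map g)
  | prism {k i j : ℕ} {l : List V} : PrismTuple g O K v₀ k l → i < K → j < l.length →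
      PrismTuple g O K v₀ (k + 1) (prismSimplex (O (i + 1)) (O i) l j)

lemma length_prismSimplex (f g : V → W) {l : List V} {i : ℕ} (hi : i < l.length) :
    (prismSimplex f g l i).length = l.length + 1 := by
  simp only [prismSimplex, List.length_append, List.length_map, List.length_take, List.length_drop]
  omega

lemma exists_of_mem_prismSimplex {f g : V → W} {l : List V} {i : ℕ} {w : W}
    (hw : w ∈ prismSimplex f g l i) : ∃ v ∈ l, w = f v ∨ w = g v := by
  rcases List.mem_append.1 hw with hw | hw <;> obtain ⟨v, hv, rfl⟩ := List.mem_map.1 hw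
  · exact ⟨v, List.mem_of_mem_take hv, .inl rfl⟩
  · exact ⟨v, List.mem_of_mem_drop hv, .inr rfl⟩

lemma PrismTuple.length_eq {g : V → V} {O : ℕ → V → V} {K : ℕ} {v₀ : V} {k : ℕ} {l : List V}
    (h : PrismTuple g O K v₀ k l) : l.length = k + 1 := by
  induction h with
  | base => rfl
  | map _ ih => rw [List.length_map, ih]
  | prism _ _ hj ih => rw [length_prismSimplex _ _ hj, ih]

/-- Evaluation of cochains on the chains `cₖ` with boundaries `∂ cₖ₊₁ = dₖ cₖ`, where `dₖ` is the
differential `periodicDiff`. They start at the vertex `v₀` and are continued by the contraction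
`prismSum`, and represent the periodic resolution inside the simplex on all vertices. -/
def fundamentalChain (p : ℕ) (g : V → V) (O : ℕ → V → V) (K : ℕ) (v₀ : V) :
    ℕ → TupleCochain R V →ₗ[R] R
  | 0 => LinearMap.proj [v₀]
  | k + 1 => fundamentalChain p g O K v₀ k ∘ₗ periodicDiff p g k ∘ₗ prismSum O K

variable {p : ℕ} {g : V → V} {O : ℕ → V → V} {K : ℕ} {v₀ : V} {k : ℕ}

lemma fundamentalChain_succ (φ : TupleCochain R V) :
    fundamentalChain p g O K v₀ (k + 1) φ =
      fundamentalChain p g O K v₀ k (periodicDiff p g k (prismSum O K φ)) := rfl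

lemma fundamentalChain_coboundary [CharP R p] (hg : g^[p] = id) (h_zero : O 0 = id)
    (h_const : ∀ v w, O K v = O K w) (φ : TupleCochain R V) :
    fundamentalChain p g O K v₀ (k + 1) (coboundary φ) =
      fundamentalChain p g O K v₀ k (periodicDiff p g k φ) := by
  have h_last (k : ℕ) (φ : TupleCochain R V) : periodicDiff p g k (pullback (O K) φ) = 0 := by
    ext l
    refine periodicDiff_eq_zero_of_invariant fun i => ?_
    rw [pullback_apply, pullback_apply, List.map_map]
    exact congrArg φ (List.map_congr_left fun v _ => h_const _ _)
  have h_first (φ : TupleCochain R V) : pullback (O 0) φ = φ := by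
    ext l
    simp [h_zero]
  have h_expand (k : ℕ) (φ : TupleCochain R V) :
      fundamentalChain p g O K v₀ (k + 1) (coboundary φ) =
        fundamentalChain p g O K v₀ k (periodicDiff p g k φ) -
          fundamentalChain p g O K v₀ k (coboundary (periodicDiff p g k (prismSum O K φ))) := by
    simp only [fundamentalChain_succ, prismSum_coboundary, map_sub, h_first, h_last, sub_zero,
      periodicDiff_coboundary]
  rw [h_expand, sub_eq_self]
  induction k generalizing φ with
  | zero => simp [fundamentalChain, coboundary_cons, periodicDiff_of_even, prismSum_apply]
  | succ k ih =>
    rw [h_expand, ih, periodicDiff_periodicDiff hg, map_zero, sub_zero]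

lemma fundamentalChain_congr {φ ψ : TupleCochain R V}
    (h : ∀ l, PrismTuple g O K v₀ k l → φ l = ψ l) :
    fundamentalChain p g O K v₀ k φ = fundamentalChain p g O K v₀ k ψ := by
  induction k generalizing φ ψ with
  | zero => exact h _ .base
  | succ k ih =>
    refine ih fun l hl => periodicDiff_congr fun i => ?_
    have h_iterate : PrismTuple g O K v₀ k (l.map g^[i]) := by
      induction i with
      | zero => simpa using hl
      | succ i ih_iterate =>
        rw [iterate_succ', ← List.map_map]
        exact ih_iterate.map
    simp only [prismSum_apply, prism_apply]
    refine sum_congr rfl fun a ha => sum_congr rfl fun b hb => ?_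
    rw [h _ (h_iterate.prism (mem_range.1 ha) (mem_range.1 hb))]

end FundamentalChain

section Alternating

/-- The alternating cochains: those changing sign when two consecutive vertices are swapped, and
vanishing on tuples with two equal consecutive vertices. -/
def alternating (R L : Type*) [CommRing R] : Submodule R (TupleCochain R L) where
  carrier := {φ | ∀ s t a b, φ (s ++ a :: b :: t) + φ (s ++ b :: a :: t) = 0 ∧
    φ (s ++ a :: a :: t) = 0}
  zero_mem' := by simp
  add_mem' {φ ψ} hφ hψ s t a b := by
    obtain ⟨hφ_swap, hφ_diag⟩ := hφ s t a b
    obtain ⟨hψ_swap, hψ_diag⟩ := hψ s t a b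
    refine ⟨?_, by simp [hφ_diag, hψ_diag]⟩
    simp only [Pi.add_apply]
    linear_combination hφ_swap + hψ_swap
  smul_mem' c φ hφ s t a b := by
    obtain ⟨h_swap, h_diag⟩ := hφ s t a b
    simp [h_diag, ← mul_add, h_swap]

variable {φ : TupleCochain R L}

lemma link_mem_alternating (hφ : φ ∈ alternating R L) (v : L) : link v φ ∈ alternating R L :=
  fun s t a b => hφ (v :: s) t a b

lemma pullback_mem_alternating {φ : TupleCochain R W} (hφ : φ ∈ alternating R W) (f : L → W) :
    pullback f φ ∈ alternating R L := by
  intro s t a b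
  simpa using hφ (s.map f) (t.map f) (f a) (f b)

lemma coboundary_mem_alternating (hφ : φ ∈ alternating R L) :
    coboundary φ ∈ alternating R L := by
  intro s t a b
  induction s generalizing φ with
  | nil =>
    have h_swap : coboundary (link b (link a φ) + link a (link b φ)) t = 0 :=
      (coboundary_congr (ψ := 0) fun l _ => (hφ [] l a b).1).trans (by simp)
    have h_diag : coboundary (link a (link a φ)) t = 0 :=
      (coboundary_congr (ψ := 0) fun l _ => (hφ [] l a b).2).trans (by simp)
    rw [map_add, Pi.add_apply] at h_swap
    simp only [List.nil_append, coboundary_cons, link_apply]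
    exact ⟨by linear_combination h_swap, by linear_combination h_diag⟩
  | cons v s ih =>
    obtain ⟨h_swap, h_diag⟩ := hφ s t a b
    obtain ⟨ih_swap, ih_diag⟩ := ih (link_mem_alternating hφ v)
    simp only [List.cons_append, coboundary_cons]
    exact ⟨by linear_combination h_swap - ih_swap, by linear_combination h_diag - ih_diag⟩

lemma apply_append_eq_zero_of_mem_alternating (hφ : φ ∈ alternating R L) (a : L)
    (u s t : List L) : φ (u ++ a :: (s ++ a :: t)) = 0 := by
  induction s generalizing u with
  | nil => exact (hφ u t a a).2
  | cons b s ih =>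
    have h_swap := (hφ u (s ++ a :: t) a b).1
    have ih_append := ih (u ++ [b])
    simp only [List.append_assoc, List.cons_append, List.nil_append] at h_swap ih_append ⊢
    linear_combination h_swap - ih_append

lemma apply_eq_zero_of_not_nodup (hφ : φ ∈ alternating R L) {l : List L} (hl : ¬ l.Nodup) :
    φ l = 0 := by
  induction l generalizing φ with
  | nil => simp at hl
  | cons a l ih =>
    by_cases ha : a ∈ l
    · obtain ⟨s, t, rfl⟩ := List.append_of_mem ha
      exact apply_append_eq_zero_of_mem_alternating hφ a [] s t
    · exact ih (link_mem_alternating hφ a) fun h => hl (List.nodup_cons.2 ⟨ha, h⟩)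

end Alternating

section Obstruction

variable [DecidableEq L] {p : ℕ} {σ : L → L} {r : Finset L → ZMod p}

/-- The complex `X` is invariant under the map `σ` of order dividing `p`, and `r` is an
equivariant map from its faces to the cyclic group of order `p`, on which `σ` acts by `+ 1`. -/
structure EquivariantIndex (X : PreAbstractSimplicialComplex L) (σ : L → L)
    (r : Finset L → ZMod p) : Prop where
  iterate_eq_id : σ^[p] = id
  image_mem : ∀ S ∈ X, S.image σ ∈ X
  apply_image : ∀ S ∈ X, r (S.image σ) = r S + 1

/-- A preimage of `φ` under the differential `periodicDiff p σ k`, provided that `φ` lies in the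
kernel of the next one. It is built from the fundamental domain `{r = 0}`. -/
def periodicPrimitive (σ : L → L) (r : Finset L → ZMod p) (k : ℕ) (φ : TupleCochain R L) :
    TupleCochain R L := fun l =>
  if Even k then -∑ i ∈ range (p - (r l.toFinset).val), φ (l.map σ^[i])
  else if r l.toFinset = 0 then φ l else 0

lemma periodicPrimitive_mem_alternating {k : ℕ} {φ : TupleCochain R L}
    (hφ : φ ∈ alternating R L) : periodicPrimitive σ r k φ ∈ alternating R L := by
  intro s t a b
  have h_toFinset : (s ++ b :: a :: t).toFinset = (s ++ a :: b :: t).toFinset :=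
    List.toFinset_eq_of_perm _ _ ((List.Perm.swap a b t).append_left s)
  have h_iterate (i : ℕ) := pullback_mem_alternating hφ σ^[i] s t a b
  obtain ⟨h_swap, h_diag⟩ := hφ s t a b
  simp only [pullback_apply] at h_iterate
  simp only [periodicPrimitive, h_toFinset]
  split_ifs
  · rw [← neg_add, ← sum_add_distrib]
    simp only [(h_iterate _).1, (h_iterate _).2, sum_const_zero, neg_zero, and_self]
  all_goals simp [h_swap, h_diag, -List.append_assoc]

lemma toFinset_map (σ : L → L) (l : List L) : (l.map σ).toFinset = l.toFinset.image σ := by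
  ext
  simp

namespace EquivariantIndex

variable {X : PreAbstractSimplicialComplex L} {l : List L} {k : ℕ} {φ : TupleCochain R L}

lemma toFinset_map_mem (h : EquivariantIndex X σ r) (hl : l.toFinset ∈ X) :
    (l.map σ).toFinset ∈ X := by
  rw [toFinset_map]
  exact h.image_mem _ hl

lemma apply_toFinset_map (h : EquivariantIndex X σ r) (hl : l.toFinset ∈ X) :
    r (l.map σ).toFinset = r l.toFinset + 1 := by
  rw [toFinset_map]
  exact h.apply_image _ hl

lemma periodicDiff_periodicPrimitive_of_even [NeZero p] (h : EquivariantIndex X σ r)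
    (hk : Even k) (hφ : ∀ l : List L, l.toFinset ∈ X → periodicDiff p σ (k + 1) φ l = 0)
    (hl : l.toFinset ∈ X) : periodicDiff p σ k (periodicPrimitive σ r k φ) l = φ l := by
  have h_orbit : ∑ i ∈ range p, φ (l.map σ^[i]) = 0 := by
    rw [← periodicDiff_of_odd hk.add_one, hφ l hl]
  have h_tail : ∑ i ∈ range p, φ (l.map σ^[i + 1]) = 0 := by
    have h_succ := sum_range_succ' (fun i => φ (l.map σ^[i])) p
    rw [sum_range_succ, h_orbit, h.iterate_eq_id] at h_succ
    simpa using h_succ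
  have h_cast : r l.toFinset + 1 = ((r l.toFinset).val + 1 : ℕ) := by simp
  rw [periodicDiff_of_even hk]
  simp only [periodicPrimitive, if_pos hk, h.apply_toFinset_map hl, List.map_map,
    ← iterate_succ, h_cast]
  rcases (Nat.succ_le_of_lt (ZMod.val_lt (r l.toFinset))).lt_or_eq with h_lt | h_eq
  · rw [ZMod.val_cast_of_lt h_lt,
      show p - (r l.toFinset).val = p - ((r l.toFinset).val + 1) + 1 by omega, sum_range_succ']
    simp
  · rw [Nat.succ_eq_add_one] at h_eq
    rw [h_eq, ZMod.natCast_self, ZMod.val_zero, Nat.sub_zero, h_tail,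
      show p - (r l.toFinset).val = 1 by omega]
    simp

lemma periodicDiff_periodicPrimitive_of_odd [NeZero p] (h : EquivariantIndex X σ r)
    (hk : Odd k) (hφ : ∀ l : List L, l.toFinset ∈ X → periodicDiff p σ (k + 1) φ l = 0)
    (hl : l.toFinset ∈ X) : periodicDiff p σ k (periodicPrimitive σ r k φ) l = φ l := by
  have h_invariant {l : List L} (hl : l.toFinset ∈ X) : φ (l.map σ) = φ l := by
    have := hφ l hl
    rwa [periodicDiff_of_even hk.add_one, sub_eq_zero] at this
  have h_iterate (i : ℕ) : (l.map σ^[i]).toFinset ∈ X ∧ φ (l.map σ^[i]) = φ l ∧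
      r (l.map σ^[i]).toFinset = r l.toFinset + i := by
    induction i with
    | zero => simpa using hl
    | succ i ih =>
      obtain ⟨ih_mem, ih_apply, ih_index⟩ := ih
      rw [iterate_succ', ← List.map_map]
      refine ⟨h.toFinset_map_mem ih_mem, by rw [h_invariant ih_mem, ih_apply], ?_⟩
      rw [h.apply_toFinset_map ih_mem, ih_index]
      push_cast
      ring
  rw [periodicDiff_of_odd hk]
  simp only [periodicPrimitive, if_neg (Nat.not_even_iff_odd.2 hk), (h_iterate _).2.1,
    (h_iterate _).2.2]
  rw [sum_eq_single (-r l.toFinset).val]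
  · simp
  · intro i hi h_ne
    refine if_neg fun h_zero => h_ne ?_
    rw [← eq_neg_of_add_eq_zero_right h_zero, ZMod.val_cast_of_lt (mem_range.1 hi)]
  · exact fun h_notMem => absurd (mem_range.2 (ZMod.val_lt _)) h_notMem

lemma periodicDiff_periodicPrimitive [NeZero p] (h : EquivariantIndex X σ r)
    (hφ : ∀ l : List L, l.toFinset ∈ X → periodicDiff p σ (k + 1) φ l = 0)
    (hl : l.toFinset ∈ X) : periodicDiff p σ k (periodicPrimitive σ r k φ) l = φ l :=
  k.even_or_odd.elim (fun hk => h.periodicDiff_periodicPrimitive_of_even hk hφ hl)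
    fun hk => h.periodicDiff_periodicPrimitive_of_odd hk hφ hl

end EquivariantIndex

/-- The cocycles `ωₖ` obstructing equivariant maps from the resolution: `ωₖ₊₁` is the coboundary of
a preimage of `ωₖ` under `periodicDiff`, and `ω₀` is the constant `1` on single vertices. -/
def obstructionCocycle (R : Type*) [CommRing R] (σ : L → L) (r : Finset L → ZMod p) :
    ℕ → TupleCochain R L
  | 0 => coboundary (Pi.single [] 1)
  | k + 1 => coboundary (periodicPrimitive σ r k (obstructionCocycle R σ r k))

lemma obstructionCocycle_mem_alternating (k : ℕ) :
    obstructionCocycle R σ r k ∈ alternating R L := by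
  induction k with
  | zero =>
    refine coboundary_mem_alternating fun s t a b => ?_
    simp
  | succ k ih => exact coboundary_mem_alternating (periodicPrimitive_mem_alternating ih)

lemma periodicDiff_obstructionCocycle [NeZero p] [CharP R p] {X : PreAbstractSimplicialComplex L}
    (h : EquivariantIndex X σ r) (k : ℕ) {l : List L} (hl : l.toFinset ∈ X) :
    periodicDiff p σ (k + 1) (obstructionCocycle R σ r k) l = 0 := by
  induction k generalizing l with
  | zero =>
    rw [obstructionCocycle, periodicDiff_coboundary]
    refine (coboundary_congr (ψ := 0) fun l' _ => ?_).trans (by simp)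
    exact periodicDiff_eq_zero_of_invariant fun i => by simp [Pi.single_apply]
  | succ k ih =>
    set ω := obstructionCocycle R σ r k
    have h_agree (l' : List L) (h_sub : l'.Sublist l) :
        periodicDiff p σ k (periodicPrimitive σ r k ω) l' = ω l' := by
      rcases eq_or_ne l' [] with rfl | h_ne
      · rw [periodicDiff_eq_zero_of_invariant fun i => rfl]
        cases k <;> rfl
      · have h_subset : l'.toFinset ⊆ l.toFinset := fun a => by
          simpa using fun ha : a ∈ l' => h_sub.subset ha
        exact h.periodicDiff_periodicPrimitive (fun _ => ih) <|
          X.isRelLowerSet_faces.mem_of_le hl h_subset ((List.toFinset_nonempty_iff _).2 h_ne)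
    rw [periodicDiff_add_two, obstructionCocycle, periodicDiff_coboundary,
      coboundary_congr h_agree]
    cases k <;> simp [ω, obstructionCocycle, coboundary_coboundary]

/-- A Tucker lemma for the cyclic group of order `p`: the obstruction cocycles pair to `1` with the
fundamental chains, but, being alternating, vanish on tuples with repeated labels. -/
theorem exists_prismTuple_nodup_map [Fact (1 < p)] {X : PreAbstractSimplicialComplex L}
    (h : EquivariantIndex X σ r) {g : V → V} (hg : g^[p] = id) {O : ℕ → V → V} {K : ℕ}
    (h_zero : O 0 = id) (h_const : ∀ v w, O K v = O K w) (v₀ : V) {lab : V → L}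
    (h_lab : Semiconj lab g σ) (N : ℕ)
    (h_mem : ∀ k ≤ N, ∀ l, PrismTuple g O K v₀ k l → (l.map lab).toFinset ∈ X) :
    ∃ l, PrismTuple g O K v₀ N l ∧ (l.map lab).Nodup := by
  have : NeZero p := ⟨by have := Fact.out (p := 1 < p); omega⟩
  have h_one (k : ℕ) (hk : k ≤ N) : fundamentalChain p g O K v₀ k
      (pullback lab (obstructionCocycle (ZMod p) σ r k)) = 1 := by
    induction k with
    | zero => simp [fundamentalChain, obstructionCocycle, coboundary_cons]
    | succ k ih =>
      rw [obstructionCocycle, pullback_coboundary, fundamentalChain_coboundary hg h_zero h_const,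
        periodicDiff_pullback h_lab, ← ih (by omega)]
      refine fundamentalChain_congr fun l hl => ?_
      exact h.periodicDiff_periodicPrimitive (fun _ => periodicDiff_obstructionCocycle h k)
        (h_mem k (by omega) l hl)
  by_contra! h_degenerate
  have h_vanish : fundamentalChain p g O K v₀ N
      (pullback lab (obstructionCocycle (ZMod p) σ r N)) = fundamentalChain p g O K v₀ N 0 :=
    fundamentalChain_congr fun l hl =>
      apply_eq_zero_of_not_nodup (obstructionCocycle_mem_alternating N) (h_degenerate l hl)
  simp [h_one N le_rfl] at h_vanish

end Obstruction

end TupleCochain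

namespace Necklace

section JoinBoundary

variable {ι T : Type*}

/-- The join, over `ι`, of copies of the boundary of the simplex with vertex set `T`: a face
contains no full column `{j} × T`. -/
def joinBoundary (ι T : Type*) : PreAbstractSimplicialComplex (ι × T) where
  faces := {S | S.Nonempty ∧ ∀ j, ∃ t, (j, t) ∉ S}
  isRelLowerSet_faces := fun _ ⟨h_nonempty, h_proper⟩ =>
    ⟨h_nonempty, fun _ h_le h_nonempty' =>
      ⟨h_nonempty', fun j => (h_proper j).imp fun _ ht h => ht (h_le h)⟩⟩

lemma mem_joinBoundary {S : Finset (ι × T)} :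
    S ∈ joinBoundary ι T ↔ S.Nonempty ∧ ∀ j, ∃ t, (j, t) ∉ S := Iff.rfl

lemma card_le_of_mem_joinBoundary [Fintype ι] [Fintype T] {S : Finset (ι × T)}
    (hS : S ∈ joinBoundary ι T) : #S ≤ (Fintype.card T - 1) * Fintype.card ι := by
  classical
  have h_column (j : ι) : #{x ∈ S | x.1 = j} ≤ Fintype.card T - 1 := by
    obtain ⟨t, ht⟩ := (mem_joinBoundary.1 hS).2 j
    rw [← card_univ, ← card_erase_of_mem (mem_univ t)]
    refine card_le_card_of_injOn Prod.snd ?_ ?_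
    · intro x hx
      obtain ⟨hx, rfl⟩ := mem_filter.1 (mem_coe.1 hx)
      exact mem_coe.2 (mem_erase.2 ⟨fun h_eq => ht (by rwa [← h_eq]), mem_univ _⟩)
    · rintro ⟨j₁, t₁⟩ h₁ ⟨j₂, t₂⟩ h₂ h_eq
      simp_all
  calc #S = ∑ j, #{x ∈ S | x.1 = j} := card_eq_sum_card_fiberwise fun x _ => mem_univ x.1
    _ ≤ ∑ _j : ι, (Fintype.card T - 1) := sum_le_sum fun j _ => h_column j
    _ = (Fintype.card T - 1) * Fintype.card ι := by simp [mul_comm]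

variable {p : ℕ}

lemma image_add_one_mem_joinBoundary [DecidableEq ι] {S : Finset (ι × ZMod p)}
    (hS : S ∈ joinBoundary ι (ZMod p)) :
    S.image (Prod.map id (· + 1)) ∈ joinBoundary ι (ZMod p) := by
  refine mem_joinBoundary.2 ⟨hS.1.image _, fun j => ?_⟩
  obtain ⟨t, ht⟩ := (mem_joinBoundary.1 hS).2 j
  exact ⟨t + 1, by simpa⟩

lemma sum_image_add_one_div_card [Fact p.Prime] {C : Finset (ZMod p)} (h_nonempty : C.Nonempty)
    (h_proper : C ≠ univ) :
    (∑ t ∈ C.image (· + 1), t) / #(C.image (· + 1)) = (∑ t ∈ C, t) / (#C : ZMod p) + 1 := by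
  have h_card : (#C : ZMod p) ≠ 0 := by
    have h_lt := (card_lt_iff_ne_univ C).2 h_proper
    rw [ZMod.card] at h_lt
    rw [Ne, ZMod.natCast_eq_zero_iff]
    exact Nat.not_dvd_of_pos_of_lt h_nonempty.card_pos h_lt
  rw [card_image_of_injective _ (add_left_injective 1),
    sum_image (add_left_injective (1 : ZMod p)).injOn, sum_add_distrib]
  field_simp
  simp

lemma exists_equivariantIndex_joinBoundary [DecidableEq ι] [Fact p.Prime] :
    ∃ r : Finset (ι × ZMod p) → ZMod p,
      TupleCochain.EquivariantIndex (joinBoundary ι (ZMod p)) (Prod.map id (· + 1)) r := by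
  have h_iterate : (Prod.map id (· + 1) : ι × ZMod p → ι × ZMod p)^[p] = id := by
    rw [Prod.map_iterate, add_right_iterate]
    ext <;> simp
  rcases isEmpty_or_nonempty ι with _ | _
  · exact ⟨0, h_iterate, fun _ => image_add_one_mem_joinBoundary,
      fun S ⟨⟨x, _⟩, _⟩ => isEmptyElim x.1⟩
  choose! j hj using fun (J : Finset ι) (hJ : J.Nonempty) => hJ
  let column (S : Finset (ι × ZMod p)) : Finset (ZMod p) := {t | (j (S.image Prod.fst), t) ∈ S}
  refine ⟨fun S => (∑ t ∈ column S, t) / #(column S), h_iterate,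
    fun _ => image_add_one_mem_joinBoundary, fun S hS => ?_⟩
  have h_column : column (S.image (Prod.map id (· + 1))) = (column S).image (· + 1) := by
    have h_fst : (S.image (Prod.map id (· + 1))).image Prod.fst = S.image Prod.fst := by
      simp [image_image, comp_def]
    ext t
    simp [column, h_fst, ← eq_add_neg_iff_add_eq]
  have h_nonempty : (column S).Nonempty := by
    have := hj _ (hS.1.image Prod.fst)
    simpa [column, Finset.Nonempty] using this
  have h_proper : column S ≠ univ := by
    obtain ⟨t, ht⟩ := hS.2 (j (S.image Prod.fst))
    exact fun h => ht (by simpa [column] using h.ge (mem_univ t))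
  simp only [h_column]
  exact sum_image_add_one_div_card h_nonempty h_proper

end JoinBoundary

section Cuts

variable {α β T T' : Type*} [LinearOrder α] [Fintype α] [LinearOrder β] [Fintype β]

open Classical in
/-- The cuts needed to realize an assignment of the beads to thieves. A cut is represented by the
bead that precedes it. -/
noncomputable def cuts (f : β → T) : Finset β := {x | ∃ y, x ⋖ y ∧ f x ≠ f y}

@[simp]
lemma mem_cuts {f : β → T} {x : β} : x ∈ cuts f ↔ ∃ y, x ⋖ y ∧ f x ≠ f y := by
  simp [cuts]

lemma cuts_comp_of_injective {g : T → T'} (hg : Injective g) (f : β → T) :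
    cuts (g ∘ f) = cuts f := by
  ext x
  simp [hg.ne_iff]

lemma exists_mem_cuts_of_ne {f : β → T} {a b : β} (h_le : a ≤ b) (h_ne : f a ≠ f b) :
    ∃ x ∈ cuts f, a ≤ x ∧ x < b := by
  induction a using WellFoundedGT.induction with
  | ind a ih =>
    obtain ⟨y, h_covBy, hy⟩ :=
      exists_covBy_le_of_lt (h_le.lt_of_ne fun h_eq => h_ne (congrArg f h_eq))
    by_cases h_eq : f a = f y
    · obtain ⟨x, hx, h_ge, h_lt⟩ := ih y h_covBy.lt hy (h_eq ▸ h_ne)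
      exact ⟨x, hx, h_covBy.le.trans h_ge, h_lt⟩
    · exact ⟨a, mem_cuts.2 ⟨y, h_covBy, h_eq⟩, le_rfl, h_covBy.lt.trans_le hy⟩

lemma card_cuts_comp_le {s : α → β} (hs : StrictMono s) (f : β → T) :
    #(cuts (f ∘ s)) ≤ #(cuts f) := by
  have h_between (x : cuts (f ∘ s)) : ∃ z ∈ cuts f, s x ≤ z ∧ ∀ x', x < x' → z < s x' := by
    obtain ⟨y, h_covBy, h_ne⟩ := mem_cuts.1 x.2
    obtain ⟨z, hz, h_ge, h_lt⟩ := exists_mem_cuts_of_ne (hs h_covBy.lt).le h_ne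
    exact ⟨z, hz, h_ge, fun x' h => h_lt.trans_le (hs.monotone (h_covBy.ge_of_gt h))⟩
  choose z hz h_ge h_lt using h_between
  have h_mono : StrictMono z := fun x x' h => (h_lt x x' h).trans_le (h_ge x')
  exact card_le_card_of_injective (f := fun x => ⟨z x, hz x⟩) fun x x' h =>
    h_mono.injective (congrArg Subtype.val h)

end Cuts

section Shares

variable {β ι T : Type*} [Fintype β] [DecidableEq ι] [DecidableEq T]

/-- The beads of color `j` received by the thief `t`, where `c` is the coloring and `f` the
assignment of the beads to thieves. -/
def share (c : β → ι) (f : β → T) (j : ι) (t : T) : Finset β := {x | c x = j ∧ f x = t}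

@[simp]
lemma mem_share {c : β → ι} {f : β → T} {j : ι} {t : T} {x : β} :
    x ∈ share c f j t ↔ c x = j ∧ f x = t := by
  simp [share]

lemma sum_card_share [Fintype T] (c : β → ι) (f : β → T) (j : ι) :
    ∑ t, #(share c f j t) = #{x | c x = j} := by
  simp only [share, ← filter_filter]
  exact (card_eq_sum_card_fiberwise fun x _ => mem_univ (f x)).symm

lemma card_share_le_add_hammingDist (c : β → ι) (u v : β → T) (j : ι) (t : T) :
    #(share c v j t) ≤ #(share c u j t) + hammingDist v u := by
  classical
  rw [hammingDist]
  refine (card_le_card fun x hx => ?_).trans (card_union_le _ _)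
  simp only [share, mem_union, mem_filter, mem_univ, true_and] at hx ⊢
  by_cases h : v x = u x
  · exact .inl ⟨hx.1, h ▸ hx.2⟩
  · exact .inr h

lemma exists_card_mul_card_share_le [Fintype T] [Nonempty T] (c : β → ι) (u : β → T) (D : ℕ)
    (j : ι) : ∃ t, ∀ v, hammingDist v u ≤ D →
      Fintype.card T * #(share c v j t) ≤ #{x | c x = j} + Fintype.card T * D := by
  obtain ⟨t, -, ht⟩ : ∃ t ∈ univ, Fintype.card T * #(share c u j t) ≤ #{x | c x = j} := by
    refine exists_le_of_sum_le univ_nonempty ?_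
    rw [← mul_sum, sum_card_share]
    simp
  refine ⟨t, fun v hv => ?_⟩
  calc Fintype.card T * #(share c v j t)
      ≤ Fintype.card T * (#(share c u j t) + D) := by
        gcongr
        exact (card_share_le_add_hammingDist c u v j t).trans (by gcongr)
    _ ≤ #{x | c x = j} + Fintype.card T * D := by
        rw [mul_add]
        gcongr

end Shares

section EraseBelow

variable {β T : Type*} [Fintype β] [Zero T]

/-- The assignment `v` with the beads of rank less than `i` reassigned to the thief `0`. -/
def eraseBelow (rank : β → ℕ) (i : ℕ) (v : β → T) : β → T :=
  fun x => if rank x < i then 0 else v x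

lemma card_cuts_eraseBelow_le [LinearOrder β] {rank : β → ℕ} (h_rank : Monotone rank) (i : ℕ)
    (v : β → T) : #(cuts (eraseBelow rank i v)) ≤ #(cuts v) + 1 := by
  classical
  let boundary : Finset β := {x | rank x < i ∧ ∃ y, x ⋖ y ∧ i ≤ rank y}
  have h_subset : cuts (eraseBelow rank i v) ⊆ cuts v ∪ boundary := by
    intro x hx
    obtain ⟨y, h_covBy, h_ne⟩ := mem_cuts.1 hx
    have h_le := h_rank h_covBy.le
    simp only [eraseBelow] at h_ne
    simp only [boundary, mem_union, mem_cuts, mem_filter, mem_univ, true_and]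
    split_ifs at h_ne with hx hy hy
    · exact absurd rfl h_ne
    · exact .inr ⟨hx, y, h_covBy, not_lt.1 hy⟩
    · omega
    · exact .inl ⟨y, h_covBy, h_ne⟩
  have h_boundary : #boundary ≤ 1 := by
    have h_not_lt {x x' : β} (hx : x ∈ boundary) (hx' : x' ∈ boundary) : ¬ x < x' := by
      intro h_lt
      obtain ⟨-, y, h_covBy, hy⟩ := (mem_filter.1 hx).2
      have := h_rank (h_covBy.ge_of_gt h_lt)
      have := (mem_filter.1 hx').2.1
      omega
    exact card_le_one.2 fun x hx x' hx' =>
      le_antisymm (not_lt.1 (h_not_lt hx' hx)) (not_lt.1 (h_not_lt hx hx'))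
  exact (card_le_card h_subset).trans ((card_union_le _ _).trans (by gcongr))

lemma hammingDist_eraseBelow_le [DecidableEq T] {rank : β → ℕ} (h_rank : Injective rank) {a b : ℕ}
    (hab : a ≤ b + 1) (hba : b ≤ a + 1) (v w : β → T) :
    hammingDist (eraseBelow rank a v) (eraseBelow rank b w) ≤ hammingDist v w + 1 := by
  classical
  have h_level : #{x | rank x = min a b} ≤ 1 := card_le_one.2 fun x hx x' hx' =>
    h_rank ((mem_filter.1 hx).2.trans (mem_filter.1 hx').2.symm)
  rw [hammingDist, hammingDist]
  refine (card_le_card fun x hx => ?_).trans ((card_union_le _ _).trans (by gcongr))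
  simp only [mem_union, mem_filter, mem_univ, true_and] at hx ⊢
  simp only [eraseBelow] at hx
  split_ifs at hx
  · exact absurd rfl hx
  · exact .inr (by omega)
  · exact .inr (by omega)
  · exact .inl hx

end EraseBelow

section PrismTuple

open TupleCochain

variable {β T : Type*} [AddGroupWithOne T] [Fintype β] {rank : β → ℕ} {K k : ℕ}
  {l : List (β → T)}

lemma card_cuts_le_of_prismTuple [LinearOrder β] (h_rank : Monotone rank)
    (h : PrismTuple (· + 1) (eraseBelow rank) K 0 k l) : ∀ v ∈ l, #(cuts v) ≤ k := by
  induction h with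
  | base => simp [cuts]
  | map _ ih =>
    intro v hv
    obtain ⟨u, hu, rfl⟩ := List.mem_map.1 hv
    exact (congrArg card (cuts_comp_of_injective (add_left_injective 1) u)).trans_le (ih u hu)
  | prism _ _ _ ih =>
    intro v hv
    obtain ⟨u, hu, rfl | rfl⟩ := exists_of_mem_prismSimplex hv <;>
      exact (card_cuts_eraseBelow_le h_rank _ u).trans (by gcongr; exact ih u hu)

lemma hammingDist_le_of_prismTuple [DecidableEq T] (h_rank : Injective rank)
    (h : PrismTuple (· + 1) (eraseBelow rank) K 0 k l) :
    ∀ v ∈ l, ∀ w ∈ l, hammingDist v w ≤ k := by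
  induction h with
  | base => simp
  | map _ ih =>
    intro v hv w hw
    obtain ⟨v', hv', rfl⟩ := List.mem_map.1 hv
    obtain ⟨w', hw', rfl⟩ := List.mem_map.1 hw
    exact (hammingDist_comp_le_hammingDist fun _ => (· + 1)).trans (ih v' hv' w' hw')
  | prism _ _ _ ih =>
    intro v hv w hw
    obtain ⟨v', hv', rfl | rfl⟩ := exists_of_mem_prismSimplex hv <;>
      obtain ⟨w', hw', rfl | rfl⟩ := exists_of_mem_prismSimplex hw <;>
        exact (hammingDist_eraseBelow_le h_rank (by omega) (by omega) v' w').trans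
          (by gcongr; exact ih v' hv' w' hw')

end PrismTuple

section PrimeCase

open TupleCochain

variable {β ι : Type*}

lemma exists_equivariant_choice {T : Type*} [AddGroup T] (x₀ : β) {P : (β → T) → ι × T → Prop}
    (hP : ∀ v s x, P v x → P (v + const β s) (x.1, x.2 + s)) (h_exists : ∀ v, ∃ x, P v x) :
    ∃ lab : (β → T) → ι × T, (∀ v, P v (lab v)) ∧
      ∀ v s, lab (v + const β s) = ((lab v).1, (lab v).2 + s) := by
  choose pick h_pick using h_exists
  let base (v : β → T) : ι × T := pick (v - const β (v x₀))
  refine ⟨fun v => ((base v).1, (base v).2 + v x₀), fun v => ?_, fun v s => ?_⟩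
  · simpa using hP _ (v x₀) _ (h_pick (v - const β (v x₀)))
  · have h_base : base (v + const β s) = base v := by
      simp only [base]
      congr 1
      ext x
      simp
    simp [h_base, add_assoc]

/-- Every necklace with colors `ι` has a splitting among the thieves `T` with at most
`(|T| - 1) |ι|` cuts that is fair up to an error independent of the necklace. -/
def ApproxSplit.{u} (ι T : Type*) [Fintype ι] [DecidableEq ι] [Fintype T] [DecidableEq T] : Prop :=
  ∃ C : ℕ, ∀ (β : Type u) [LinearOrder β] [Fintype β] (c : β → ι), ∃ f : β → T,
    #(cuts f) ≤ (Fintype.card T - 1) * Fintype.card ι ∧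
      ∀ j t, Fintype.card T * #(share c f j t) ≤ #{x | c x = j} + C

lemma exists_equivariant_unfair_label [DecidableEq ι] {p : ℕ} [NeZero p] [LinearOrder β] [Fintype β]
    {c : β → ι} {N C : ℕ}
    (h_unfair : ∀ f : β → ZMod p, #(cuts f) ≤ N →
      ∃ j t, #{x | c x = j} + C < p * #(share c f j t)) :
    ∃ lab : (β → ZMod p) → ι × ZMod p,
      (∀ f, #(cuts f) ≤ N →
        #{x | c x = (lab f).1} + C < p * #(share c f (lab f).1 (lab f).2)) ∧
      Semiconj lab (· + 1) (Prod.map id (· + 1)) := by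
  obtain ⟨j, t, h_pos⟩ := h_unfair 0 (by simp [cuts])
  obtain ⟨x₀, -⟩ : (share c (0 : β → ZMod p) j t).Nonempty :=
    nonempty_of_ne_empty fun h => by simp [h] at h_pos
  let P (f : β → ZMod p) (x : ι × ZMod p) : Prop :=
    #(cuts f) ≤ N → #{y | c y = x.1} + C < p * #(share c f x.1 x.2)
  have hP (f s x) (h : P f x) : P (f + const β s) (x.1, x.2 + s) := by
    have h_share : share c (f + const β s) x.1 (x.2 + s) = share c f x.1 x.2 := by
      ext y
      simp
    have h_cuts : cuts (f + const β s) = cuts f := cuts_comp_of_injective (add_left_injective s) f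
    simpa only [P, h_share, h_cuts] using h
  have h_exists (f : β → ZMod p) : ∃ x, P f x := by
    by_cases h_cuts : #(cuts f) ≤ N
    · obtain ⟨j, t, h⟩ := h_unfair f h_cuts
      exact ⟨(j, t), fun _ => h⟩
    · exact ⟨(j, t), fun h => absurd h h_cuts⟩
  obtain ⟨lab, h_lab, h_shift⟩ := exists_equivariant_choice x₀ hP h_exists
  exact ⟨lab, h_lab, fun f => h_shift f 1⟩

lemma exists_strictMono_lt (β : Type*) [LinearOrder β] [Fintype β] :
    ∃ rank : β → ℕ, StrictMono rank ∧ ∀ x, rank x < Fintype.card β :=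
  have e := (Fintype.orderIsoFinOfCardEq β rfl).symm
  ⟨fun x => e x, fun _ _ h => e.strictMono h, fun x => (e x).2⟩

theorem approxSplit_zmod.{u} (ι : Type*) [Fintype ι] [DecidableEq ι] (p : ℕ) [Fact p.Prime] :
    ApproxSplit.{u} ι (ZMod p) := by
  let N := (p - 1) * Fintype.card ι
  refine ⟨p * N, fun β _ _ c => ?_⟩
  rw [ZMod.card]
  by_contra! h_unfair
  obtain ⟨lab, h_lab, h_semiconj⟩ := exists_equivariant_unfair_label h_unfair
  obtain ⟨rank, h_rank, h_rank_lt⟩ := exists_strictMono_lt β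
  obtain ⟨r, hr⟩ := exists_equivariantIndex_joinBoundary (ι := ι) (p := p)
  have h_mem (k : ℕ) (hk : k ≤ N) (l : List (β → ZMod p))
      (hl : PrismTuple (· + 1) (eraseBelow rank) (Fintype.card β) 0 k l) :
      (l.map lab).toFinset ∈ joinBoundary ι (ZMod p) := by
    obtain ⟨u, hu⟩ := List.exists_mem_of_length_pos (by rw [hl.length_eq]; omega)
    refine mem_joinBoundary.2
      ⟨⟨lab u, List.mem_toFinset.2 (List.mem_map_of_mem hu)⟩, fun j => ?_⟩
    obtain ⟨t, ht⟩ := exists_card_mul_card_share_le c u N j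
    refine ⟨t, fun h => ?_⟩
    obtain ⟨v, hv, h_eq⟩ := List.mem_map.1 (List.mem_toFinset.1 h)
    have h_large := h_lab v ((card_cuts_le_of_prismTuple h_rank.monotone hl v hv).trans hk)
    have h_small := ht v ((hammingDist_le_of_prismTuple h_rank.injective hl v hv u hu).trans hk)
    rw [h_eq] at h_large
    rw [ZMod.card] at h_small
    exact h_large.not_ge h_small
  have h_iterate : (· + 1 : (β → ZMod p) → β → ZMod p)^[p] = id := by
    ext f x
    simp
  have h_zero : eraseBelow rank 0 = (id : (β → ZMod p) → β → ZMod p) := by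
    ext f x
    simp [eraseBelow]
  have h_const (f f' : β → ZMod p) :
      eraseBelow rank (Fintype.card β) f = eraseBelow rank (Fintype.card β) f' := by
    ext x
    simp [eraseBelow, h_rank_lt]
  obtain ⟨l, hl, h_nodup⟩ :=
    exists_prismTuple_nodup_map hr h_iterate h_zero h_const 0 h_semiconj N h_mem
  have h_card := card_le_of_mem_joinBoundary (h_mem N le_rfl l hl)
  rw [List.toFinset_card_of_nodup h_nodup, List.length_map, hl.length_eq, ZMod.card] at h_card
  omega

end PrimeCase

section Subdivide

lemma card_filter_subtype {α : Type*} [Fintype α] (P Q : α → Prop) [DecidablePred P]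
    [DecidablePred Q] : #{x : {x // P x} | Q x} = #{x | P x ∧ Q x} := by
  rw [← card_map (Embedding.subtype _)]
  congr 1
  ext x
  simp [and_comm]

variable {β ι T₁ T₂ : Type*} {f : β → T₁} {g : ∀ t, {x // f x = t} → T₂}

/-- The assignment to pairs of thieves in which the beads that `f` assigns to `t` are split further
by `g t`. -/
def subdivide (f : β → T₁) (g : ∀ t, {x // f x = t} → T₂) (x : β) : T₁ × T₂ :=
  (f x, g (f x) ⟨x, rfl⟩)

lemma subdivide_of_eq {x : β} {t : T₁} (h : f x = t) : subdivide f g x = (t, g t ⟨x, h⟩) := by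
  subst h
  rfl

variable [Fintype β] [DecidableEq T₁]

lemma card_cuts_subdivide_le [LinearOrder β] [Fintype T₁] {N : ℕ}
    (h_cuts : ∀ t, #(cuts (g t)) ≤ N) :
    #(cuts (subdivide f g)) ≤ #(cuts f) + Fintype.card T₁ * N := by
  let inner (t : T₁) : Finset β := (cuts (g t)).map (Embedding.subtype _)
  have h_subset : cuts (subdivide f g) ⊆ cuts f ∪ univ.biUnion inner := by
    intro x hx
    obtain ⟨y, h_covBy, h_ne⟩ := mem_cuts.1 hx
    by_cases h_eq : f y = f x
    · have h_covBy_subtype : (⟨x, rfl⟩ : {z // f z = f x}) ⋖ ⟨y, h_eq⟩ :=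
        h_covBy.of_image (OrderEmbedding.subtype _)
      rw [subdivide_of_eq h_eq, subdivide_of_eq rfl] at h_ne
      have h_inner : ⟨x, rfl⟩ ∈ cuts (g (f x)) :=
        mem_cuts.2 ⟨_, h_covBy_subtype, fun h => h_ne (Prod.ext rfl h)⟩
      exact mem_union_right _ (mem_biUnion.2 ⟨f x, mem_univ _, mem_map.2 ⟨_, h_inner, rfl⟩⟩)
    · exact mem_union_left _ (mem_cuts.2 ⟨y, h_covBy, Ne.symm h_eq⟩)
  calc #(cuts (subdivide f g)) ≤ #(cuts f) + #(univ.biUnion inner) :=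
        (card_le_card h_subset).trans (card_union_le _ _)
    _ ≤ #(cuts f) + Fintype.card T₁ * N := by
        gcongr
        exact card_biUnion_le_card_mul _ _ _ fun t _ => by simpa [inner] using h_cuts t

variable [DecidableEq ι] (c : β → ι) (j : ι)

lemma card_share_subdivide [DecidableEq T₂] (t₁ : T₁) (t₂ : T₂) :
    #(share c (subdivide f g) j (t₁, t₂)) = #(share (fun x => c x.1) (g t₁) j t₂) := by
  rw [← card_map (Embedding.subtype _)]
  congr 1
  ext x
  by_cases h : f x = t₁
  · simp [subdivide_of_eq h, h]
  · simp [subdivide, h]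

end Subdivide

section Composite

universe u

variable {ι T T₁ T₂ : Type*} [Fintype ι] [DecidableEq ι] [Fintype T] [DecidableEq T]
  [Fintype T₁] [DecidableEq T₁] [Fintype T₂] [DecidableEq T₂]

lemma ApproxSplit.congr (e : T₁ ≃ T₂) (h : ApproxSplit.{u} ι T₁) : ApproxSplit.{u} ι T₂ := by
  obtain ⟨C, hC⟩ := h
  refine ⟨C, fun β _ _ c => ?_⟩
  obtain ⟨f, h_cuts, h_share⟩ := hC β c
  refine ⟨e ∘ f, ?_, fun j t => ?_⟩
  · rwa [cuts_comp_of_injective e.injective, ← Fintype.card_congr e]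
  · have h_eq : share c (e ∘ f) j t = share c f j (e.symm t) := by
      ext x
      simp [Equiv.eq_symm_apply]
    rw [h_eq, ← Fintype.card_congr e]
    exact h_share j _

lemma approxSplit_of_unique [Unique T] : ApproxSplit.{u} ι T :=
  ⟨0, fun β _ _ c => ⟨default, by simp [cuts], fun j t => by
    rw [Fintype.card_unique, one_mul, add_zero]
    exact card_le_card fun x hx => by simpa using (mem_share.1 hx).1⟩⟩

lemma ApproxSplit.prod [Nonempty T₁] [Nonempty T₂] (h₁ : ApproxSplit.{u} ι T₁)
    (h₂ : ApproxSplit.{u} ι T₂) : ApproxSplit.{u} ι (T₁ × T₂) := by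
  obtain ⟨C₁, hC₁⟩ := h₁
  obtain ⟨C₂, hC₂⟩ := h₂
  refine ⟨C₁ + Fintype.card T₁ * C₂, fun β _ _ c => ?_⟩
  obtain ⟨f, hf_cuts, hf_share⟩ := hC₁ β c
  choose g hg_cuts hg_share using fun t => hC₂ {x // f x = t} fun x => c x.1
  refine ⟨subdivide f g, (card_cuts_subdivide_le hg_cuts).trans ?_, ?_⟩
  · obtain ⟨a, ha⟩ := Nat.exists_eq_add_one_of_ne_zero (Fintype.card_ne_zero (α := T₁))
    obtain ⟨b, hb⟩ := Nat.exists_eq_add_one_of_ne_zero (Fintype.card_ne_zero (α := T₂))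
    rw [ha] at hf_cuts
    rw [Fintype.card_prod, ha, hb]
    have h_pred : (a + 1) * (b + 1) - 1 = a + (a + 1) * b := by
      rw [mul_add_one]
      omega
    calc #(cuts f) + (a + 1) * ((b + 1 - 1) * Fintype.card ι)
        ≤ a * Fintype.card ι + (a + 1) * (b * Fintype.card ι) :=
          Nat.add_le_add_right hf_cuts _
      _ = ((a + 1) * (b + 1) - 1) * Fintype.card ι := by rw [h_pred]; ring
  · rintro j ⟨t₁, t₂⟩
    rw [card_share_subdivide, Fintype.card_prod]
    have h_fiber : #{x : {x // f x = t₁} | c x = j} = #(share c f j t₁) := by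
      rw [card_filter_subtype (fun x => f x = t₁) fun x => c x = j]
      simp only [share, and_comm]
    calc Fintype.card T₁ * Fintype.card T₂ * #(share (fun x => c x.1) (g t₁) j t₂)
        ≤ Fintype.card T₁ * (#(share c f j t₁) + C₂) := by
          rw [mul_assoc, ← h_fiber]
          exact Nat.mul_le_mul_left _ (hg_share t₁ j t₂)
      _ ≤ #{x | c x = j} + (C₁ + Fintype.card T₁ * C₂) := by
          rw [mul_add, ← add_assoc]
          gcongr
          exact hf_share j t₁

theorem approxSplit_fin {q : ℕ} (hq : q ≠ 0) : ApproxSplit.{u} ι (Fin q) := by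
  induction q using Nat.recOnMul with
  | zero => exact absurd rfl hq
  | one => exact approxSplit_of_unique
  | prime p hp =>
    have : Fact p.Prime := ⟨hp⟩
    exact (approxSplit_zmod ι p).congr (ZMod.finEquiv p).toEquiv.symm
  | mul a b ha hb =>
    have : NeZero a := ⟨left_ne_zero_of_mul hq⟩
    have : NeZero b := ⟨right_ne_zero_of_mul hq⟩
    exact ((ha (NeZero.ne a)).prod (hb (NeZero.ne b))).congr finProdFinEquiv

theorem approxSplit [Nonempty T] : ApproxSplit.{u} ι T :=
  (approxSplit_fin Fintype.card_ne_zero).congr (Fintype.equivFin T).symm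

end Composite

section FractionalSplitting

lemma card_filter_lex_fst {β : Type*} [Fintype β] (P : β → Prop) [DecidablePred P] (M : ℕ) :
    #{x : β ×ₗ Fin M | P (ofLex x).1} = M * #{b | P b} := by
  have h_eq : ({x | P (ofLex x).1} : Finset (β ×ₗ Fin M)) =
      (({b | P b} : Finset β) ×ˢ univ).map toLex.toEmbedding := by
    ext x
    simp
  rw [h_eq, card_map, card_product, card_fin, mul_comm]

variable {β ι T : Type*} [Fintype β] [DecidableEq ι] [DecidableEq T]

lemma sum_card_share_lex_fst_le (c : β → ι) (j : ι) {M : ℕ} (f : β ×ₗ Fin M → T) (S : Finset T) :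
    ∑ t ∈ S, #(share (fun x => c (ofLex x).1) f j t) ≤
      M * #{b | c b = j ∧ ∃ t ∈ S, ∃ k, f (toLex (b, k)) = t} := by
  simp only [share, ← filter_filter _ (fun _ => _ = _)]
  rw [sum_card_fiberwise_eq_card_filter, filter_filter,
    ← card_filter_lex_fst fun b => c b = j ∧ ∃ t ∈ S, ∃ k, f (toLex (b, k)) = t]
  gcongr
  exact fun h_mem => ⟨f _, h_mem, _, rfl⟩

variable [Fintype T]

lemma card_mul_le_of_card_share_le {c : β → ι} {f : β → T} {j : ι} {C : ℕ}
    (h : ∀ t, Fintype.card T * #(share c f j t) ≤ #{x | c x = j} + C) (S : Finset T) :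
    #S * #{x | c x = j} ≤ Fintype.card T * (∑ t ∈ S, #(share c f j t) + C) := by
  have h_compl : Fintype.card T * ∑ t ∈ Sᶜ, #(share c f j t) ≤ #Sᶜ * (#{x | c x = j} + C) := by
    rw [mul_sum]
    exact sum_le_card_nsmul _ _ _ fun t _ => h t
  have h_sum := congrArg (Fintype.card T * ·) (sum_card_share c f j)
  simp only [← sum_add_sum_compl S, mul_add, ← card_add_card_compl S] at h_sum h_compl ⊢
  nlinarith

theorem exists_fractional_splitting [LinearOrder β] [Fintype ι] [Nonempty T] (c : β → ι) :
    ∃ A : β → Finset T,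
      (∀ F : β → T, (∀ b, F b ∈ A b) → #(cuts F) ≤ (Fintype.card T - 1) * Fintype.card ι) ∧
      ∀ j S, #S * #{b | c b = j} ≤ Fintype.card T * #{b | c b = j ∧ ∃ t ∈ S, t ∈ A b} := by
  obtain ⟨C, hC⟩ := approxSplit (ι := ι) (T := T)
  let M := Fintype.card T * C + 1
  obtain ⟨f, h_cuts, h_share⟩ := hC (β ×ₗ Fin M) fun x => c (ofLex x).1
  refine ⟨fun b => {t | ∃ k, f (toLex (b, k)) = t}, fun F hF => ?_, fun j S => ?_⟩
  · choose k hk using fun b => (mem_filter.1 (hF b)).2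
    have h_mono : StrictMono fun b => toLex (b, k b) := fun b b' h =>
      Prod.Lex.toLex_lt_toLex.2 (.inl h)
    have h_eq : F = f ∘ fun b => toLex (b, k b) := funext fun b => (hk b).symm
    exact h_eq ▸ (card_cuts_comp_le h_mono f).trans h_cuts
  · simp only [mem_filter, mem_univ, true_and]
    set x := #{b | c b = j ∧ ∃ t ∈ S, ∃ k, f (toLex (b, k)) = t}
    have h_lt : M * (#S * #{b | c b = j}) < M * (Fintype.card T * x + 1) := by
      calc M * (#S * #{b | c b = j}) = #S * #{x : β ×ₗ Fin M | c (ofLex x).1 = j} := by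
            rw [card_filter_lex_fst fun b => c b = j]
            ring
        _ ≤ Fintype.card T * (M * x + C) :=
            (card_mul_le_of_card_share_le (h_share j) S).trans
              (by gcongr; exact sum_card_share_lex_fst_le c j f S)
        _ < M * (Fintype.card T * x + 1) := by
            simp only [M]
            nlinarith
    exact Nat.lt_succ_iff.1 (Nat.lt_of_mul_lt_mul_left h_lt)

end FractionalSplitting

section Rounding

lemma exists_forall_mem_card_fiber_eq {B T : Type*} [Fintype B] [Fintype T] [DecidableEq T]
    {A : B → Finset T} {d : T → ℕ} (hd : ∑ t, d t = Fintype.card B)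
    (h_hall : ∀ S, ∑ t ∈ S, d t ≤ #{b | ∃ t ∈ S, t ∈ A b}) :
    ∃ F : B → T, (∀ b, F b ∈ A b) ∧ ∀ t, #{b | F b = t} = d t := by
  classical
  let N (x : Σ t, Fin (d t)) : Finset B := {b | x.1 ∈ A b}
  have h_card (X : Finset (Σ t, Fin (d t))) : #X ≤ #(X.biUnion N) := by
    calc #X ≤ #((X.image Sigma.fst).sigma fun t => (univ : Finset (Fin (d t)))) :=
          card_le_card fun x hx => mem_sigma.2 ⟨mem_image_of_mem _ hx, mem_univ _⟩
      _ = ∑ t ∈ X.image Sigma.fst, d t := by simp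
      _ ≤ #{b | ∃ t ∈ X.image Sigma.fst, t ∈ A b} := h_hall _
      _ ≤ #(X.biUnion N) := card_le_card fun b hb => by
          obtain ⟨t, ht, h_mem⟩ := (mem_filter.1 hb).2
          obtain ⟨x, hx, rfl⟩ := mem_image.1 ht
          exact mem_biUnion.2 ⟨x, hx, by simpa [N] using h_mem⟩
  obtain ⟨e, he, h_mem⟩ := (all_card_le_biUnion_card_iff_exists_injective N).1 h_card
  have h_bij : Bijective e := (Fintype.bijective_iff_injective_and_card e).2 ⟨he, by simp [hd]⟩
  let e' := Equiv.ofBijective e h_bij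
  refine ⟨fun b => (e'.symm b).1, fun b => ?_, fun t => ?_⟩
  · simpa [N, e', Equiv.ofBijective_apply_symm_apply] using h_mem (e'.symm b)
  · have h_fiber : ({b | (e'.symm b).1 = t} : Finset B) =
        (({t} : Finset T).sigma fun t => (univ : Finset (Fin (d t)))).map e'.toEmbedding := by
      ext b
      simp
    rw [h_fiber, card_map, card_sigma, sum_singleton, card_fin]

lemma card_mul_sum_advantage_lt {T : Type*} [DecidableEq T] {q a : ℕ} (hq : 0 < q) {w : Finset T}
    (hw : #w = a % q) (hr : a % q = 0 ∨ a % q = 1 ∨ a % q = q - 1) (S : Finset T) :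
    q * ∑ t ∈ S, (a / q + if t ∈ w then 1 else 0) < #S * a + q := by
  have h_inter_le : #(S ∩ w) ≤ #S := card_le_card inter_subset_left
  have h_inter_le_mod : #(S ∩ w) ≤ a % q := hw ▸ card_le_card inter_subset_right
  have h_advantage : q * #(S ∩ w) < #S * (a % q) + q := by
    obtain ⟨r, rfl⟩ := Nat.exists_eq_add_one_of_ne_zero hq.ne'
    rcases hr with h | h | h <;> rw [h] at h_inter_le_mod ⊢
    · simp [Nat.le_zero.1 h_inter_le_mod]
    · nlinarith
    · simp only [Nat.add_sub_cancel] at h_inter_le_mod ⊢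
      nlinarith
  calc q * ∑ t ∈ S, (a / q + if t ∈ w then 1 else 0)
      = #S * (q * (a / q)) + q * #(S ∩ w) := by
        rw [sum_add_distrib, sum_const, smul_eq_mul, sum_boole, Nat.cast_id, filter_mem_eq_inter]
        ring
    _ < #S * (q * (a / q) + a % q) + q := by
        rw [mul_add, add_assoc]
        gcongr
    _ = #S * a + q := by rw [Nat.div_add_mod]

variable {β ι T : Type*} [Fintype β] [LinearOrder β] [Fintype ι] [DecidableEq ι] [Fintype T]
  [DecidableEq T]

theorem exists_card_share_eq [Nonempty T] {c : β → ι} {d : ι → T → ℕ}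
    (hd : ∀ j, ∑ t, d j t = #{x | c x = j})
    (h_lt : ∀ j S, Fintype.card T * ∑ t ∈ S, d j t < #S * #{x | c x = j} + Fintype.card T) :
    ∃ f : β → T, #(cuts f) ≤ (Fintype.card T - 1) * Fintype.card ι ∧
      ∀ j t, #(share c f j t) = d j t := by
  obtain ⟨A, h_cuts, hA⟩ := exists_fractional_splitting (T := T) c
  have h_color (j : ι) : ∃ F : {b // c b = j} → T,
      (∀ b : {b // c b = j}, F b ∈ A b) ∧ ∀ t, #{b : {b // c b = j} | F b = t} = d j t := by
    refine exists_forall_mem_card_fiber_eq (by rw [hd, Fintype.card_subtype]) fun S => ?_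
    rw [card_filter_subtype (fun b => c b = j) fun b => ∃ t ∈ S, t ∈ A b]
    have h_bound := (h_lt j S).trans_le (Nat.add_le_add_right (hA j S) _)
    rw [← mul_add_one] at h_bound
    exact Nat.lt_succ_iff.1 (Nat.lt_of_mul_lt_mul_left h_bound)
  choose F hF_mem hF_card using h_color
  refine ⟨fun b => F (c b) ⟨b, rfl⟩, h_cuts _ fun b => hF_mem _ _, fun j t => ?_⟩
  have h_share : share c (fun b => F (c b) ⟨b, rfl⟩) j t =
      ({b | F j b = t} : Finset {b // c b = j}).map (Embedding.subtype _) := by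
    ext b
    simp only [mem_share, mem_map, mem_filter, mem_univ, true_and, Embedding.coe_subtype,
      Subtype.exists, exists_and_right, exists_eq_right]
    exact ⟨fun ⟨h, h_eq⟩ => by subst h; exact ⟨rfl, h_eq⟩,
      fun ⟨h, h_eq⟩ => by subst h; exact ⟨rfl, h_eq⟩⟩
  rw [h_share, card_map, hF_card]

end Rounding

lemma mem_cuts_fin {n : ℕ} {T : Type*} {f : Fin n → T} {i : Fin n} :
    i ∈ cuts f ↔ ∃ h : (i : ℕ) + 1 < n, f i ≠ f ⟨(i : ℕ) + 1, h⟩ := by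
  simp only [mem_cuts, Fin.covBy_iff, Nat.covBy_iff_add_one_eq]
  constructor
  · rintro ⟨⟨_, h⟩, rfl, h_ne⟩
    exact ⟨h, h_ne⟩
  · rintro ⟨h, h_ne⟩
    exact ⟨⟨_, h⟩, rfl, h_ne⟩

end Necklace

/-- Theorem 3 (necklace splitting with advantages): a necklace is a sequence of
`n` beads colored by `c : Fin n → Fin m`, with `a j` beads of color `j`. If the
remainder of each `a j` modulo `q` lies in `{0, 1, q-1}`, then for any
prescription `w j` of the set of thieves who are to receive `⌈a j / q⌉` beads
of color `j` (with `|w j| = a j % q`), there is an assignment `f` of beads to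
thieves with at most `(q-1)m` cuts realizing the prescription. -/
theorem necklace_advantage (q n m : ℕ) (hq : 0 < q) (c : Fin n → Fin m)
    (a : Fin m → ℕ) (ha : ∀ j, a j = Nat.card {i : Fin n // c i = j})
    (hr : ∀ j, a j % q = 0 ∨ a j % q = 1 ∨ a j % q = q - 1)
    (w : Fin m → Finset (Fin q)) (hw : ∀ j, (w j).card = a j % q) :
    ∃ f : Fin n → Fin q,
      Nat.card {i : Fin n // ∃ h : (i : ℕ) + 1 < n, f i ≠ f ⟨(i : ℕ) + 1, h⟩} ≤
        (q - 1) * m ∧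
      ∀ (j : Fin m) (t : Fin q),
        Nat.card {i : Fin n // c i = j ∧ f i = t} =
          a j / q + if t ∈ w j then 1 else 0 := by
  have : NeZero q := ⟨hq.ne'⟩
  have h_count (j : Fin m) : a j = #{i | c i = j} := by
    rw [ha, Nat.card_eq_fintype_card, Fintype.card_subtype]
  let d (j : Fin m) (t : Fin q) : ℕ := a j / q + if t ∈ w j then 1 else 0
  have h_sum (j : Fin m) : ∑ t, d j t = #{i | c i = j} := by
    simp [d, sum_add_distrib, hw, Nat.div_add_mod, ← h_count]
  have h_lt (j : Fin m) (S : Finset (Fin q)) :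
      Fintype.card (Fin q) * ∑ t ∈ S, d j t < #S * #{i | c i = j} + Fintype.card (Fin q) := by
    rw [Fintype.card_fin, ← h_count]
    exact Necklace.card_mul_sum_advantage_lt hq (hw j) (hr j) S
  obtain ⟨f, h_cuts, h_share⟩ := Necklace.exists_card_share_eq h_sum h_lt
  rw [Fintype.card_fin, Fintype.card_fin] at h_cuts
  refine ⟨f, ?_, fun j t => ?_⟩
  · simpa only [← Necklace.mem_cuts_fin, Nat.card_eq_fintype_card, Fintype.card_coe] using h_cuts
  · rw [Nat.card_eq_fintype_card, Fintype.card_subtype]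
    exact h_share j t
end
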